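/- arXiv:1301.3708 — 6 statements merged into one kernel-verified Lean document; each statement's English description precedes it below -/
import Mathlib

section
/- Let N ≥ 1, n ≥ 1 be integers, let A ∈ ℂ^{N×N} be Hermitian positive definite with eigendecomposition A = U_A D_A U_A^H where U_A is unitary and D_A is real diagonal with 0 < (D_A)_{1,1} ≤ … ≤ (D_A)_{N,N}, and let B ∈ ℂ^{n×n} be Hermitian positive semidefinite with eigendecomposition B = U_B D_B U_B^H where U_B is unitary and D_B is real diagonal with (D_B)_{1,1} ≥ … ≥ (D_B)_{n,n} ≥ 0. Assume N ≥ rank(B) and set m = min(n, N). Let D_P ∈ ℂ^{n×N} be the rectangular diagonal matrix with (D_P)_{i,i} = √((D_A)_{i,i}(D_B)_{i,i}) for i = 1,…,m and all other entries zero, and set P_opt = U_B D_P U_A^H. Then P_opt is feasible, i.e. P_opt A^{-1} P_opt^H ⪰ B, it satisfies tr(P_opt P_opt^H) = Σ_{i=1}^m (D_A)_{i,i}(D_B)_{i,i}, and every P ∈ ℂ^{n×N} with P A^{-1} P^H ⪰ B satisfies tr(P P^H) ≥ tr(P_opt P_opt^H). (Theorem 1, optimality part.) -/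
open Matrix Finset
open scoped ComplexOrder

theorem abel_aux : ∀ (N : ℕ) (a d : Fin N → ℝ), (∀ i, 0 ≤ a i) → Monotone a →
    (∀ k : ℕ, 0 ≤ ∑ j : Fin N, if k ≤ (j : ℕ) then d j else 0) → 0 ≤ ∑ j, a j * d j := by
  intro N
  induction N with
  | zero => intro a d _ _ _; simp
  | succ N ih =>
    intro a d ha hm hk
    have h1 := ih (fun j => a j.succ - a 0) (fun j => d j.succ)
      (fun i => sub_nonneg.2 (hm (Fin.zero_le _)))
      (fun i j hij => sub_le_sub_right (hm (Fin.succ_le_succ_iff.2 hij)) _)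
      (fun k => by
        have := hk (k+1)
        rw [Fin.sum_univ_succ] at this
        simpa using this)
    have h0 := hk 0
    simp only [Nat.zero_le, if_true] at h0
    rw [Fin.sum_univ_succ] at h0 ⊢
    simp only [sub_mul, Finset.sum_sub_distrib, ← Finset.mul_sum] at h1
    nlinarith [mul_nonneg (ha 0) h0]

theorem weight_aux (n k : ℕ) (b w : Fin n → ℝ) (hb : ∀ i, 0 ≤ b i) (hbm : Antitone b)
    (hw0 : ∀ i, 0 ≤ w i) (hw1 : ∀ i, w i ≤ 1) (hw : (n : ℝ) ≤ k + ∑ i, w i) :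
    (∑ i : Fin n, if k ≤ (i : ℕ) then b i else 0) ≤ ∑ i, b i * w i := by
  by_cases hkn : k < n
  · set β := b ⟨k, hkn⟩ with hβ
    have h1 : ∀ i : Fin n, (if k ≤ (i : ℕ) then b i else 0) - β * (if k ≤ (i : ℕ) then 1 else 0)
        ≤ b i * w i - β * w i := by
      intro i
      split_ifs with h
      · have : b i ≤ β := hbm (by exact h)
        nlinarith [hw1 i]
      · have : β ≤ b i := hbm (by show (i : ℕ) ≤ k; omega)
        nlinarith [hw0 i]
    have h2 := Finset.sum_le_sum (fun i (_ : i ∈ Finset.univ) => h1 i)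
    rw [Finset.sum_sub_distrib, Finset.sum_sub_distrib, ← Finset.mul_sum, ← Finset.mul_sum] at h2
    have h3 : (∑ i : Fin n, if k ≤ (i : ℕ) then (1 : ℝ) else 0) = n - k := by
      rw [Fin.sum_univ_eq_sum_range (fun i => if k ≤ i then (1 : ℝ) else 0) n,
        ← Finset.sum_filter, Finset.sum_const, nsmul_eq_mul, mul_one]
      have : (Finset.range n).filter (fun i => k ≤ i) = Finset.Ico k n := by
        ext; simp; tauto
      rw [this, Nat.card_Ico, Nat.cast_sub hkn.le]
    rw [h3] at h2
    nlinarith [hb ⟨k, hkn⟩]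
  · have : (∑ i : Fin n, if k ≤ (i : ℕ) then b i else 0) = 0 :=
      Finset.sum_eq_zero (fun i _ => if_neg (by omega))
    rw [this]
    exact Finset.sum_nonneg (fun i _ => mul_nonneg (hb i) (hw0 i))


theorem conj_diag_entry {m n : ℕ} (V : Matrix (Fin m) (Fin n) ℂ) (w : Fin n → ℝ) (i : Fin m) :
    (V * diagonal (fun l => (w l : ℂ)) * Vᴴ) i i = ((∑ l, w l * Complex.normSq (V i l) : ℝ) : ℂ) := by
  rw [Matrix.mul_apply]
  push_cast
  refine Finset.sum_congr rfl fun l _ => ?_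
  rw [Matrix.mul_diagonal, Matrix.conjTranspose_apply, Complex.star_def, Complex.normSq_eq_conj_mul_self]
  ring

theorem kyfan_aux (n k : ℕ) (b : Fin n → ℝ) (hb : ∀ i, 0 ≤ b i) (hbm : Antitone b)
    (G H : Matrix (Fin n) (Fin n) ℂ) (hG : G.IsHermitian) (hr : G.rank ≤ k) (hH : H.PosSemidef)
    (hs : (G + H - diagonal (fun i => (b i : ℂ))).PosSemidef) :
    (∑ i : Fin n, if k ≤ (i : ℕ) then b i else 0) ≤ H.trace.re := by
  obtain ⟨V, hV, ev, hcard, hGV⟩ : ∃ V : Matrix (Fin n) (Fin n) ℂ, V ∈ unitaryGroup (Fin n) ℂ ∧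
      ∃ ev : Fin n → ℝ, G.rank = Fintype.card {i // ev i ≠ 0} ∧
        Vᴴ * G * V = diagonal (fun i => (ev i : ℂ)) := by
    refine ⟨hG.eigenvectorUnitary, hG.eigenvectorUnitary.2, hG.eigenvalues,
      hG.rank_eq_card_non_zero_eigs, ?_⟩
    have := hG.conjStarAlgAut_star_eigenvectorUnitary
    rw [Unitary.conjStarAlgAut_star_apply] at this
    exact this
  have hV1 : Vᴴ * V = 1 := Matrix.mem_unitaryGroup_iff'.1 hV
  have hV2 : V * Vᴴ = 1 := Matrix.mem_unitaryGroup_iff.1 hV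
  have row : ∀ l, ∑ i, Complex.normSq (V l i) = 1 := by
    intro l
    have h := conj_diag_entry V (fun _ => 1) l
    simp only [Complex.ofReal_one, one_mul] at h
    rw [show (diagonal (fun _ => (1 : ℂ)) : Matrix (Fin n) (Fin n) ℂ) = 1 from diagonal_one,
      Matrix.mul_one, hV2, Matrix.one_apply_eq] at h
    exact_mod_cast h.symm
  have col : ∀ i, ∑ l, Complex.normSq (V l i) = 1 := by
    intro i
    have h := conj_diag_entry Vᴴ (fun _ => 1) i
    simp only [Complex.ofReal_one, one_mul] at h
    rw [show (diagonal (fun _ => (1 : ℂ)) : Matrix (Fin n) (Fin n) ℂ) = 1 from diagonal_one,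
      Matrix.mul_one, Matrix.conjTranspose_conjTranspose, hV1, Matrix.one_apply_eq] at h
    simp only [Matrix.conjTranspose_apply, Complex.star_def, Complex.normSq_conj] at h
    exact_mod_cast h.symm
  set K := Vᴴ * H * V with hK
  have hKp : K.PosSemidef := hH.conjTranspose_mul_mul_same V
  have hKt : K.trace = H.trace := by
    rw [hK, Matrix.trace_mul_comm, ← Matrix.mul_assoc, hV2, Matrix.one_mul]
  have key : ∀ i, ev i = 0 → ∑ l, b l * Complex.normSq (V l i) ≤ (K i i).re := by
    intro i hi
    have h1 := (hs.conjTranspose_mul_mul_same V).diag_nonneg (i := i)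
    have h2 := conj_diag_entry Vᴴ b i
    rw [Matrix.conjTranspose_conjTranspose] at h2
    rw [Matrix.mul_sub, Matrix.sub_mul, Matrix.mul_add, Matrix.add_mul, hGV, Matrix.sub_apply,
      h2, Matrix.add_apply, Matrix.diagonal_apply_eq, hi, ← hK] at h1
    have h3 := (Complex.le_def.1 h1).1
    simp only [Matrix.conjTranspose_apply, Complex.star_def, Complex.normSq_conj,
      Complex.sub_re, Complex.add_re, Complex.ofReal_re, Complex.zero_re] at h3
    linarith
  set Z := Finset.univ.filter (fun i => ev i = 0) with hZ
  have hZc : n ≤ k + Z.card := by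
    have h1 := Finset.card_filter_add_card_filter_not (s := (Finset.univ : Finset (Fin n))) (fun i => ev i = 0)
    rw [Fintype.card_subtype] at hcard
    simp only [Finset.card_univ, Fintype.card_fin] at h1
    have : (Finset.univ.filter (fun i => ev i ≠ 0)).card ≤ k := hcard ▸ hr
    simp only [ne_eq] at this
    rw [← hZ] at h1
    omega
  have hKn : ∀ i, 0 ≤ (K i i).re := fun i => (Complex.le_def.1 (hKp.diag_nonneg (i := i))).1
  have hw := weight_aux n k b (fun l => ∑ i ∈ Z, Complex.normSq (V l i)) hb hbm
    (fun l => Finset.sum_nonneg fun i _ => Complex.normSq_nonneg _)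
    (fun l => (row l) ▸ Finset.sum_le_sum_of_subset_of_nonneg (Finset.subset_univ _)
      fun i _ _ => Complex.normSq_nonneg _)
    (by
      rw [Finset.sum_comm, Finset.sum_congr rfl (fun i _ => col i)]
      simp only [Finset.sum_const, nsmul_eq_mul, mul_one]
      exact_mod_cast hZc)
  refine hw.trans ?_
  simp only [Finset.mul_sum]
  rw [Finset.sum_comm, ← hKt, Matrix.trace, Complex.re_sum]
  refine (Finset.sum_le_sum fun i hi => key i (Finset.mem_filter.1 hi).2).trans ?_
  exact Finset.sum_le_sum_of_subset_of_nonneg (Finset.subset_univ _) fun i _ _ => hKn i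

/-- main inequality in diagonal coordinates -/
theorem diag_aux (N n : ℕ) (a : Fin N → ℝ) (ha : ∀ i, 0 ≤ a i) (ham : Monotone a)
    (b : Fin n → ℝ) (hb : ∀ i, 0 ≤ b i) (hbm : Antitone b)
    (R : Matrix (Fin n) (Fin N) ℂ) (hs : (R * Rᴴ - diagonal (fun i => (b i : ℂ))).PosSemidef) :
    (∑ j : Fin N, a j * (if h : (j : ℕ) < n then b ⟨j, h⟩ else 0)) ≤
      ∑ i, ∑ j, a j * Complex.normSq (R i j) := by
  have main := abel_aux N a (fun j => (∑ i, Complex.normSq (R i j)) -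
    (if h : (j : ℕ) < n then b ⟨j, h⟩ else 0)) ha ham ?_
  · simp only [mul_sub, Finset.sum_sub_distrib] at main
    rw [Finset.sum_comm]
    simp only [← Finset.mul_sum]
    linarith
  intro k
  set E : Fin N → ℝ := fun j => if (j : ℕ) < k then 1 else 0 with hE
  set F : Fin N → ℝ := fun j => if k ≤ (j : ℕ) then 1 else 0 with hF
  have hEF : R * diagonal (fun l => (E l : ℂ)) * Rᴴ + R * diagonal (fun l => (F l : ℂ)) * Rᴴ
      = R * Rᴴ := by
    rw [← Matrix.add_mul, ← Matrix.mul_add, Matrix.diagonal_add]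
    have : (fun i => (E i : ℂ) + (F i : ℂ)) = fun _ => 1 := by
      funext i
      simp only [hE, hF]
      split_ifs <;> first | omega | simp
    rw [this, show (diagonal (fun _ => (1 : ℂ)) : Matrix (Fin N) (Fin N) ℂ) = 1 from diagonal_one,
      Matrix.mul_one]
  have hpd : ∀ w : Fin N → ℝ, (∀ i, 0 ≤ w i) →
      (R * diagonal (fun l => (w l : ℂ)) * Rᴴ).PosSemidef := fun w hw =>
    (Matrix.PosSemidef.diagonal (fun i => by simpa using hw i)).mul_mul_conjTranspose_same R
  have hrk : (R * diagonal (fun l => (E l : ℂ)) * Rᴴ).rank ≤ k := by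
    refine (Matrix.rank_mul_le_left _ _).trans ((Matrix.rank_mul_le_right _ _).trans ?_)
    classical
    rw [Matrix.rank_diagonal]
    refine (Fintype.card_le_of_injective (β := Fin k) (fun i => ⟨(i.1 : ℕ), ?_⟩) ?_).trans
      (Fintype.card_fin k).le
    · have := i.2
      by_contra h
      exact this (by simp [hE, h])
    · intro x y hxy
      simp only [Fin.mk.injEq] at hxy
      exact Subtype.ext (Fin.ext hxy)
  have hk := kyfan_aux n k b hb hbm _ _
    (hpd E fun i => by simp only [hE]; split_ifs <;> norm_num).isHermitian hrk
    (hpd F fun i => by simp only [hF]; split_ifs <;> norm_num) (by rw [hEF]; exact hs)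
  have htr : (R * diagonal (fun l => (F l : ℂ)) * Rᴴ).trace.re =
      ∑ j : Fin N, if k ≤ (j : ℕ) then ∑ i, Complex.normSq (R i j) else 0 := by
    rw [Matrix.trace, Complex.re_sum]
    simp only [Matrix.diag_apply, conj_diag_entry, Complex.ofReal_re]
    rw [Finset.sum_comm]
    refine Finset.sum_congr rfl fun j _ => ?_
    simp only [hF]
    split_ifs <;> simp
  rw [htr] at hk
  let f : ℕ → ℝ := fun j => if k ≤ j then (if h : j < n then b ⟨j, h⟩ else 0) else 0
  have hf0 : ∀ j, 0 ≤ f j := fun j => by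
    simp only [f]
    split_ifs <;> first | exact hb _ | exact le_rfl
  have e1 : (∑ i : Fin n, if k ≤ (i : ℕ) then b i else 0) = ∑ i ∈ Finset.range n, f i := by
    rw [← Fin.sum_univ_eq_sum_range]
    exact Finset.sum_congr rfl fun i _ => by simp [f]
  have e2 : (∑ j : Fin N, if k ≤ (j : ℕ) then (if h : (j : ℕ) < n then b ⟨j, h⟩ else 0) else 0)
      = ∑ i ∈ Finset.range N, f i := by
    rw [← Fin.sum_univ_eq_sum_range]
  have e3 : ∑ i ∈ Finset.range N, f i ≤ ∑ i ∈ Finset.range n, f i := by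
    rw [← Finset.sum_filter_of_ne (s := Finset.range N) (f := f) (p := fun i => i < n)]
    · refine Finset.sum_le_sum_of_subset_of_nonneg (fun i hi => ?_) fun i _ _ => hf0 i
      exact Finset.mem_range.2 (Finset.mem_filter.1 hi).2
    · intro i _ hi
      by_contra h
      exact hi (by simp [f, h])
  have e4 : (∑ j : Fin N, if k ≤ (j : ℕ) then ((∑ i, Complex.normSq (R i j)) -
    (if h : (j : ℕ) < n then b ⟨j, h⟩ else 0)) else 0) =
     (∑ j : Fin N, if k ≤ (j : ℕ) then ∑ i, Complex.normSq (R i j) else 0) -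
     (∑ j : Fin N, if k ≤ (j : ℕ) then (if h : (j : ℕ) < n then b ⟨j, h⟩ else 0) else 0) := by
    rw [← Finset.sum_sub_distrib]
    refine Finset.sum_congr rfl fun j _ => ?_
    by_cases h : k ≤ (j : ℕ) <;> simp [h]
  rw [e4, e2]
  linarith

theorem trace_eq_normSq {m n : ℕ} (Q : Matrix (Fin m) (Fin n) ℂ) :
    (Q * Qᴴ).trace = ((∑ i, ∑ j, Complex.normSq (Q i j) : ℝ) : ℂ) := by
  rw [Matrix.trace]
  push_cast
  refine Finset.sum_congr rfl fun i _ => ?_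
  rw [Matrix.diag_apply, Matrix.mul_apply]
  refine Finset.sum_congr rfl fun l _ => ?_
  rw [Matrix.conjTranspose_apply, Complex.star_def, Complex.normSq_eq_conj_mul_self]
  ring

theorem trace_unitary {m n : ℕ} (U : Matrix (Fin m) (Fin m) ℂ) (V : Matrix (Fin n) (Fin n) ℂ)
    (hU : Uᴴ * U = 1) (hV : Vᴴ * V = 1) (Q : Matrix (Fin m) (Fin n) ℂ) :
    ((U * Q * Vᴴ) * (U * Q * Vᴴ)ᴴ).trace = (Q * Qᴴ).trace := by
  have : (U * Q * Vᴴ) * (U * Q * Vᴴ)ᴴ = U * (Q * (Vᴴ * V) * Qᴴ * Uᴴ) := by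
    simp only [Matrix.conjTranspose_mul, Matrix.conjTranspose_conjTranspose, Matrix.mul_assoc]
  rw [this, hV, Matrix.trace_mul_comm, Matrix.mul_one, Matrix.mul_assoc, hU, Matrix.mul_one]

theorem min_sum_aux (N n : ℕ) (a : Fin N → ℝ) (b : Fin n → ℝ) :
    (∑ j : Fin N, a j * (if h : (j : ℕ) < n then b ⟨j, h⟩ else 0)) =
    ∑ i : Fin (min n N), a (Fin.castLE (min_le_right n N) i) * b (Fin.castLE (min_le_left n N) i) := by
  let f : ℕ → ℝ := fun j => if h : j < N ∧ j < n then a ⟨j, h.1⟩ * b ⟨j, h.2⟩ else 0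
  have e1 : (∑ j : Fin N, a j * (if h : (j : ℕ) < n then b ⟨j, h⟩ else 0)) =
      ∑ j ∈ Finset.range N, f j := by
    rw [← Fin.sum_univ_eq_sum_range]
    refine Finset.sum_congr rfl fun j _ => ?_
    by_cases h : (j : ℕ) < n <;> simp [f, h]
  have e2 : (∑ i : Fin (min n N), a (Fin.castLE (min_le_right n N) i) *
      b (Fin.castLE (min_le_left n N) i)) = ∑ j ∈ Finset.range (min n N), f j := by
    rw [← Fin.sum_univ_eq_sum_range]
    refine Finset.sum_congr rfl fun j _ => ?_
    have h : (j : ℕ) < N ∧ (j : ℕ) < n := by have := j.2; omega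
    simp only [f, h, and_self, dif_pos]
    rfl
  rw [e1, e2]
  symm
  refine Finset.sum_subset (Finset.range_subset_range.2 (min_le_right _ _)) fun i hi hi' => ?_
  simp only [Finset.mem_range] at hi hi'
  exact dif_neg (by omega)


/-- Theorem 1 (optimality part): the matrix `P_opt = U_B D_P U_Aᴴ` is feasible for the
constraint `P A⁻¹ Pᴴ ⪰ B`, has energy `tr(P_opt P_optᴴ) = Σ_{i<m} (D_A)_{ii} (D_B)_{ii}`
with `m = min n N`, and minimizes the energy among all feasible matrices. -/
theorem stmt0 (N n : ℕ) (hN : 1 ≤ N) (hn : 1 ≤ n)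
    (A : Matrix (Fin N) (Fin N) ℂ) (hA : A.PosDef)
    (UA : Matrix (Fin N) (Fin N) ℂ) (hUA : UA ∈ Matrix.unitaryGroup (Fin N) ℂ)
    (DA : Fin N → ℝ) (hDApos : ∀ i, 0 < DA i) (hDAmono : Monotone DA)
    (hAdec : A = UA * Matrix.diagonal (fun i => (DA i : ℂ)) * UAᴴ)
    (Bm : Matrix (Fin n) (Fin n) ℂ) (hB : Bm.PosSemidef)
    (UB : Matrix (Fin n) (Fin n) ℂ) (hUB : UB ∈ Matrix.unitaryGroup (Fin n) ℂ)
    (DB : Fin n → ℝ) (hDBnonneg : ∀ i, 0 ≤ DB i) (hDBanti : Antitone DB)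
    (hBdec : Bm = UB * Matrix.diagonal (fun i => (DB i : ℂ)) * UBᴴ)
    (hrank : Bm.rank ≤ N)
    (DP : Matrix (Fin n) (Fin N) ℂ)
    (hDP : ∀ (i : Fin n) (j : Fin N),
      DP i j = if (i : ℕ) = (j : ℕ) then (Real.sqrt (DA j * DB i) : ℂ) else 0)
    (Popt : Matrix (Fin n) (Fin N) ℂ) (hPopt : Popt = UB * DP * UAᴴ) :
    (Popt * A⁻¹ * Poptᴴ - Bm).PosSemidef ∧
    (Popt * Poptᴴ).trace =
      ((∑ i : Fin (min n N),
        DA (Fin.castLE (min_le_right n N) i) * DB (Fin.castLE (min_le_left n N) i) : ℝ) : ℂ) ∧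
    ∀ P : Matrix (Fin n) (Fin N) ℂ, (P * A⁻¹ * Pᴴ - Bm).PosSemidef →
      ((Popt * Poptᴴ).trace).re ≤ ((P * Pᴴ).trace).re := by
  have hUA1 : UAᴴ * UA = 1 := Matrix.mem_unitaryGroup_iff'.1 hUA
  have hUA2 : UA * UAᴴ = 1 := Matrix.mem_unitaryGroup_iff.1 hUA
  have hUB1 : UBᴴ * UB = 1 := Matrix.mem_unitaryGroup_iff'.1 hUB
  have hUB2 : UB * UBᴴ = 1 := Matrix.mem_unitaryGroup_iff.1 hUB
  have hne : ∀ i, (DA i : ℂ) ≠ 0 := fun i => by exact_mod_cast (hDApos i).ne'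
  have hAinv : A⁻¹ = UA * Matrix.diagonal (fun i => (DA i : ℂ)⁻¹) * UAᴴ := by
    refine Matrix.inv_eq_right_inv ?_
    rw [hAdec]
    have : UA * diagonal (fun i => (DA i : ℂ)) * UAᴴ * (UA * diagonal (fun i => (DA i : ℂ)⁻¹) * UAᴴ)
        = UA * (diagonal (fun i => (DA i : ℂ)) * ((UAᴴ * UA) * diagonal (fun i => (DA i : ℂ)⁻¹))) * UAᴴ := by
      simp only [Matrix.mul_assoc]
    rw [this, hUA1, Matrix.one_mul, Matrix.diagonal_mul_diagonal]
    simp only [mul_inv_cancel₀ (hne _)]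
    rw [show (diagonal (fun _ => (1 : ℂ)) : Matrix (Fin N) (Fin N) ℂ) = 1 from diagonal_one,
      Matrix.mul_one, hUA2]
  have hzero : ∀ i : Fin n, N ≤ (i : ℕ) → DB i = 0 := by
    intro i hi
    by_contra hne0
    have hpos : 0 < DB i := lt_of_le_of_ne (hDBnonneg i) (Ne.symm hne0)
    have hr : Bm.rank = (diagonal (fun i => (DB i : ℂ))).rank := by
      rw [hBdec, Matrix.rank_mul_eq_left_of_isUnit_det, Matrix.rank_mul_eq_right_of_isUnit_det]
      · exact (Matrix.isUnit_iff_isUnit_det _).1 (IsUnit.of_mul_eq_one _ hUB2)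
      · exact (Matrix.isUnit_iff_isUnit_det _).1 (IsUnit.of_mul_eq_one _ hUB1)
    classical
    rw [Matrix.rank_diagonal] at hr
    have hc : (i : ℕ) + 1 ≤ Fintype.card {i // (DB i : ℂ) ≠ 0} := by
      have := Fintype.card_le_of_injective (α := Fin ((i : ℕ) + 1)) (β := {i // (DB i : ℂ) ≠ 0})
        (fun x => ⟨⟨(x : ℕ), by omega⟩, by
          have h1 : DB i ≤ DB ⟨(x : ℕ), by omega⟩ := hDBanti (by show (x : ℕ) ≤ i; omega)
          exact_mod_cast (hpos.trans_le h1).ne'⟩)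
        (fun x y hxy => by
          simp only [Subtype.mk.injEq, Fin.mk.injEq] at hxy
          exact Fin.ext hxy)
      simpa using this
    omega
  have hconj : ∀ P : Matrix (Fin n) (Fin N) ℂ, UBᴴ * (P * A⁻¹ * Pᴴ) * UB =
      (UBᴴ * P * UA) * diagonal (fun i => (DA i : ℂ)⁻¹) * (UBᴴ * P * UA)ᴴ := by
    intro P
    rw [hAinv]
    simp only [Matrix.conjTranspose_mul, Matrix.conjTranspose_conjTranspose, Matrix.mul_assoc]
  have hBconj : UBᴴ * Bm * UB = diagonal (fun i => (DB i : ℂ)) := by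
    rw [hBdec]
    have : UBᴴ * (UB * diagonal (fun i => (DB i : ℂ)) * UBᴴ) * UB =
      (UBᴴ * UB) * diagonal (fun i => (DB i : ℂ)) * (UBᴴ * UB) := by
      simp only [Matrix.mul_assoc]
    rw [this, hUB1, Matrix.one_mul, Matrix.mul_one]
  have htr : (Popt * Poptᴴ).trace =
      ((∑ i : Fin (min n N),
        DA (Fin.castLE (min_le_right n N) i) * DB (Fin.castLE (min_le_left n N) i) : ℝ) : ℂ) := by
    rw [hPopt, trace_unitary UB UA hUB1 hUA1, trace_eq_normSq, ← min_sum_aux, Finset.sum_comm]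
    congr 1
    refine Finset.sum_congr rfl fun j _ => ?_
    have hterm : ∀ i : Fin n, Complex.normSq (DP i j) =
        if (i : ℕ) = (j : ℕ) then DA j * DB i else 0 := by
      intro i
      rw [hDP]
      split_ifs
      · rw [Complex.normSq_ofReal, Real.mul_self_sqrt (mul_nonneg (hDApos j).le (hDBnonneg i))]
      · simp
    simp only [hterm]
    split_ifs with h
    · rw [Finset.sum_eq_single (⟨j, h⟩ : Fin n)]
      · simp
      · intro i _ hi
        exact if_neg (fun h' => hi (Fin.ext h'))
      · simp
    · rw [mul_zero]
      exact Finset.sum_eq_zero fun i _ => if_neg (by omega)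
  refine ⟨?_, htr, ?_⟩
  · have hD : DP * diagonal (fun i => (DA i : ℂ)⁻¹) * DPᴴ = diagonal (fun i => (DB i : ℂ)) := by
      ext i k
      rw [Matrix.mul_apply]
      simp only [Matrix.mul_diagonal, Matrix.conjTranspose_apply, hDP]
      by_cases hik : i = k
      · subst hik
        rw [Matrix.diagonal_apply_eq]
        by_cases hiN : (i : ℕ) < N
        · rw [Finset.sum_eq_single (⟨i, hiN⟩ : Fin N)]
          · simp only [if_true, Complex.star_def, Complex.conj_ofReal]
            have h1 : (Real.sqrt (DA ⟨i, hiN⟩ * DB i) : ℂ) * (Real.sqrt (DA ⟨i, hiN⟩ * DB i) : ℂ)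
                = (DA ⟨i, hiN⟩ : ℂ) * DB i := by
              rw [← Complex.ofReal_mul, Real.mul_self_sqrt
                (mul_nonneg (hDApos _).le (hDBnonneg i)), Complex.ofReal_mul]
            rw [mul_right_comm, h1, mul_right_comm, mul_inv_cancel₀ (hne _), one_mul]
          · intro j _ hj
            rw [if_neg (fun h' => hj (Fin.ext h'.symm))]
            simp
          · simp
        · rw [hzero i (by omega), Complex.ofReal_zero]
          refine Finset.sum_eq_zero fun j _ => ?_
          rw [if_neg (by omega)]
          simp
      · rw [Matrix.diagonal_apply_ne _ hik]
        refine Finset.sum_eq_zero fun j _ => ?_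
        by_cases h : (i : ℕ) = j
        · rw [if_neg (c := (k : ℕ) = j) (fun h' => hik (Fin.ext (h.trans h'.symm)))]
          simp
        · rw [if_neg h]
          simp
    have : Popt * A⁻¹ * Poptᴴ = Bm := by
      rw [hPopt, hAinv, hBdec, ← hD]
      have : UB * DP * UAᴴ * (UA * diagonal (fun i => (DA i : ℂ)⁻¹) * UAᴴ) * (UB * DP * UAᴴ)ᴴ =
        UB * (DP * ((UAᴴ * UA) * (diagonal (fun i => (DA i : ℂ)⁻¹) * ((UAᴴ * UA) * DPᴴ)))) * UBᴴ := by
        simp only [Matrix.conjTranspose_mul, Matrix.conjTranspose_conjTranspose, Matrix.mul_assoc]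
      rw [this, hUA1, Matrix.one_mul, Matrix.one_mul]
      simp only [Matrix.mul_assoc]
    rw [this, sub_self]
    exact Matrix.PosSemidef.zero
  · intro P hP
    rw [htr, Complex.ofReal_re, ← min_sum_aux]
    set Q := UBᴴ * P * UA with hQ
    have hPQ : (P * Pᴴ).trace = (Q * Qᴴ).trace := by
      have := trace_unitary UBᴴ UAᴴ (by rw [Matrix.conjTranspose_conjTranspose, hUB2])
        (by rw [Matrix.conjTranspose_conjTranspose, hUA2]) P
      rw [Matrix.conjTranspose_conjTranspose UA] at this
      exact this.symm
    have hsq : ∀ j, ((Real.sqrt (DA j) : ℂ)⁻¹) * ((Real.sqrt (DA j) : ℂ)⁻¹) = (DA j : ℂ)⁻¹ := by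
      intro j
      rw [← mul_inv, ← Complex.ofReal_mul, Real.mul_self_sqrt (hDApos j).le]
    set R := Q * diagonal (fun j => (Real.sqrt (DA j) : ℂ)⁻¹) with hR
    have hRR : R * Rᴴ = Q * diagonal (fun i => (DA i : ℂ)⁻¹) * Qᴴ := by
      rw [hR, Matrix.conjTranspose_mul, Matrix.diagonal_conjTranspose, ← Matrix.mul_assoc,
        Matrix.mul_assoc Q, Matrix.diagonal_mul_diagonal]
      congr 3
      funext j
      rw [Pi.star_apply, Complex.star_def, map_inv₀, Complex.conj_ofReal, hsq]
    have hpsd : (R * Rᴴ - diagonal (fun i => (DB i : ℂ))).PosSemidef := by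
      have h := hP.conjTranspose_mul_mul_same UB
      rw [Matrix.mul_sub, Matrix.sub_mul, hconj, hBconj, ← hQ, ← hRR] at h
      exact h
    have h := diag_aux N n DA (fun i => (hDApos i).le) hDAmono DB hDBnonneg hDBanti R hpsd
    refine h.trans (le_of_eq ?_)
    rw [hPQ, trace_eq_normSq, Complex.ofReal_re]
    refine Finset.sum_congr rfl fun i _ => Finset.sum_congr rfl fun j _ => ?_
    rw [hR, Matrix.mul_diagonal, Complex.normSq_mul, Complex.normSq_inv, Complex.normSq_ofReal,
      Real.mul_self_sqrt (hDApos j).le]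
    have := (hDApos j).ne'
    field_simp
end

section
/- Let n_T, n_R ≥ 1 and B ≥ n_T be integers, let 𝓘_T ∈ ℂ^{n_T×n_T}, 𝓘_R ∈ ℂ^{n_R×n_R}, S_Q ∈ ℂ^{B×B}, S_R ∈ ℂ^{n_R×n_R} all be Hermitian positive definite, and let 𝒫 > 0. Write eigendecompositions 𝓘_T^T = U_T D_T U_T^H with U_T unitary and D_T real diagonal in descending order, and S_Q^T = U_Q D_Q U_Q^H with U_Q unitary and D_Q real diagonal in ascending order; set α_i = (D_T)_{i,i}(D_Q)_{i,i} for i = 1,…,n_T. For P ∈ ℂ^{n_T×B} of rank n_T, define J(P) = tr[(𝓘_T^T ⊗ 𝓘_R) · ((P^T ⊗ I_{n_R})^H (S_Q^T ⊗ S_R)^{-1} (P^T ⊗ I_{n_R}))^{-1}]. Let D_P ∈ ℂ^{n_T×B} be the rectangular diagonal matrix with (D_P)_{i,i} = √(𝒫 √α_i / Σ_{j=1}^{n_T} √α_j), and let P_opt be the entrywise complex conjugate of U_T D_P U_Q^H. Then P_opt has rank n_T, tr(P_opt P_opt^H) = 𝒫, J(P_opt) = tr(𝓘_R S_R) · (Σ_{i=1}^{n_T}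 √α_i)² / 𝒫, and J(P) ≥ J(P_opt) for every P ∈ ℂ^{n_T×B} of rank n_T with tr(P P^H) ≤ 𝒫. (Theorem 4.) -/
open Matrix Finset
open scoped ComplexOrder Kronecker

/-- The cost `J(P) = tr[(𝓘_Tᵀ ⊗ 𝓘_R) ((Pᵀ ⊗ I)ᴴ (S_Qᵀ ⊗ S_R)⁻¹ (Pᵀ ⊗ I))⁻¹]`. -/
noncomputable def Jcost (nT nR B : ℕ) (IT : Matrix (Fin nT) (Fin nT) ℂ)
    (IR : Matrix (Fin nR) (Fin nR) ℂ) (SQ : Matrix (Fin B) (Fin B) ℂ)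
    (SR : Matrix (Fin nR) (Fin nR) ℂ) (P : Matrix (Fin nT) (Fin B) ℂ) : ℂ :=
  ((ITᵀ ⊗ₖ IR) *
    ((Pᵀ ⊗ₖ (1 : Matrix (Fin nR) (Fin nR) ℂ))ᴴ * (SQᵀ ⊗ₖ SR)⁻¹ *
      (Pᵀ ⊗ₖ (1 : Matrix (Fin nR) (Fin nR) ℂ)))⁻¹).trace

lemma abel_aux_s6 (a d : ℕ → ℝ) (n : ℕ) (ha : ∀ i < n, a (i+1) ≤ a i)
    (hS : ∀ k ≤ n + 1, 0 ≤ ∑ i ∈ range k, d i) :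
    a n * ∑ i ∈ range (n+1), d i ≤ ∑ i ∈ range (n+1), a i * d i := by
  induction n with
  | zero => simp
  | succ n ih =>
    rw [Finset.sum_range_succ _ (n+1), Finset.sum_range_succ _ (n+1)]
    have h1 := ih (fun i hi => ha i (by omega)) (fun k hk => hS k (by omega))
    have h2 := hS (n+1) (by omega)
    have h3 := ha n (by omega)
    nlinarith

lemma abel_fin (n : ℕ) (a d : Fin n → ℝ) (ha : Antitone a) (h0 : ∀ i, 0 ≤ a i)
    (hS : ∀ k : ℕ, k ≤ n → 0 ≤ ∑ i : Fin n, if (i : ℕ) < k then d i else 0) :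
    0 ≤ ∑ i, a i * d i := by
  rcases n with _ | n
  · simp
  have key : ∀ k ≤ n + 1, ∑ i ∈ range k, (fun i => if h : i < n + 1 then d ⟨i, h⟩ else 0) i
      = ∑ i : Fin (n+1), if (i : ℕ) < k then d i else 0 := by
    intro k hk
    have h1 := Fin.sum_univ_eq_sum_range
      (fun i => if i < k then (if h : i < n + 1 then d ⟨i, h⟩ else 0) else 0) (n+1)
    have h2 : ∑ i : Fin (n+1), (if (i : ℕ) < k then d i else 0)
      = ∑ i : Fin (n+1), (fun i : ℕ => if i < k then
          (if h : i < n + 1 then d ⟨i, h⟩ else 0) else 0) (i : ℕ) := by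
      refine Finset.sum_congr rfl fun i _ => ?_
      simp only [i.2, dif_pos]
    rw [h2, h1, ← Finset.sum_filter]
    refine Finset.sum_congr ?_ fun _ _ => rfl
    ext i; simp; omega
  have h := abel_aux_s6 (fun i => if h : i < n + 1 then a ⟨i, h⟩ else 0)
    (fun i => if h : i < n + 1 then d ⟨i, h⟩ else 0) n ?_ ?_
  · have h3 : ∑ i ∈ range (n+1), (fun i => if h : i < n + 1 then a ⟨i, h⟩ else 0) i *
      (fun i => if h : i < n + 1 then d ⟨i, h⟩ else 0) i = ∑ i, a i * d i := by
      rw [← Fin.sum_univ_eq_sum_range (fun i => (fun i => if h : i < n + 1 then a ⟨i, h⟩ else 0) i *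
        (fun i => if h : i < n + 1 then d ⟨i, h⟩ else 0) i)]
      refine Finset.sum_congr rfl fun i _ => ?_
      simp only [i.2, dif_pos]
    rw [h3] at h
    refine le_trans (mul_nonneg ?_ ?_) h
    · simp [h0]
    · rw [key _ le_rfl]; exact hS _ le_rfl
  · intro i hi
    simp only [show i < n + 1 by omega, show i + 1 < n + 1 by omega, dif_pos]
    exact ha (by simp [Fin.le_def])
  · intro k hk
    rw [key k hk]; exact hS k hk

lemma rearr (n B : ℕ) (hB : n ≤ B) (a : Fin n → ℝ) (b : Fin B → ℝ) (c : Fin n → Fin B → ℝ)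
    (ha : Antitone a) (h0 : ∀ i, 0 ≤ a i) (hb : Monotone b) (hc : ∀ i j, 0 ≤ c i j)
    (hr : ∀ i, ∑ j, c i j = 1) (hcol : ∀ j, ∑ i, c i j ≤ 1) :
    ∑ i, a i * b (Fin.castLE hB i) ≤ ∑ i, a i * ∑ j, b j * c i j := by
  rw [← sub_nonneg, ← Finset.sum_sub_distrib]
  simp_rw [← mul_sub]
  refine abel_fin n a _ ha h0 ?_
  intro k hk
  rcases Nat.eq_zero_or_pos k with rfl | hk0
  · simp
  set β : ℝ := b ⟨k - 1, by omega⟩ with hβ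
  have e : ∀ i : Fin n, (∑ j, b j * c i j - b (Fin.castLE hB i))
      = ∑ j, (b j - β) * (c i j - if (i : ℕ) = j then 1 else 0) := by
    intro i
    have e1 : ∀ f : Fin B → ℝ, ∑ j : Fin B, f j * (if (i : ℕ) = j then (1 : ℝ) else 0)
        = f (Fin.castLE hB i) := by
      intro f
      rw [Finset.sum_eq_single (Fin.castLE hB i)]
      · simp
      · intro j _ hj
        rw [if_neg, mul_zero]
        intro h; exact hj (Fin.ext h.symm)
      · simp
    simp_rw [mul_sub]
    rw [Finset.sum_sub_distrib, e1]
    simp_rw [sub_mul]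
    rw [Finset.sum_sub_distrib, ← Finset.mul_sum, hr]
    ring
  simp_rw [e]
  have e2 : ∀ i : Fin n, (if (i : ℕ) < k then
      ∑ j, (b j - β) * (c i j - if (i : ℕ) = j then 1 else 0) else 0)
      = ∑ j : Fin B, (b j - β) * (if (i : ℕ) < k then (c i j - if (i : ℕ) = j then 1 else 0) else 0) := by
    intro i; split_ifs <;> simp
  simp_rw [e2]
  rw [Finset.sum_comm]
  refine Finset.sum_nonneg fun j _ => ?_
  rw [← Finset.mul_sum]
  by_cases hj : (j : ℕ) < k
  · have hbj : b j ≤ β := hb (by simp [Fin.le_def]; omega)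
    refine mul_nonneg_of_nonpos_of_nonpos (by linarith) ?_
    have : ∑ i : Fin n, (if (i : ℕ) < k then (c i j - if (i : ℕ) = j then 1 else 0) else 0)
      ≤ ∑ i : Fin n, (c i j - if i = (⟨j, by omega⟩ : Fin n) then 1 else 0) := by
      refine Finset.sum_le_sum fun i _ => ?_
      have h1 := hc i j
      simp only [Fin.ext_iff]
      split_ifs
      · rfl
      · rfl
      · omega
      · simpa using h1
    rw [Finset.sum_sub_distrib] at this
    simp only [Finset.sum_ite_eq', Finset.mem_univ, if_true] at this
    linarith [hcol j]
  · have hbj : β ≤ b j := hb (by simp [Fin.le_def]; omega)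
    refine mul_nonneg (by linarith) (Finset.sum_nonneg fun i _ => ?_)
    have h1 := hc i j
    split_ifs
    · omega
    · simpa using h1
    · rfl

lemma trace_diag_aux {m n : ℕ} (a : Fin m → ℝ) (d : Fin n → ℝ) (X : Matrix (Fin m) (Fin n) ℂ) :
    (Matrix.diagonal (fun i => (a i : ℂ)) * (X * Matrix.diagonal (fun i => (d i : ℂ)) * Xᴴ)).trace
      = ((∑ i, a i * ∑ j, d j * Complex.normSq (X i j) : ℝ) : ℂ) := by
  simp only [Matrix.trace, Matrix.diag_apply, Matrix.diagonal_mul]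
  push_cast
  refine Finset.sum_congr rfl fun i _ => ?_
  rw [Matrix.mul_apply]
  simp only [Matrix.mul_diagonal, Matrix.conjTranspose_apply]
  congr 1
  refine Finset.sum_congr rfl fun j _ => ?_
  rw [← Complex.mul_conj]
  simp; ring

lemma row_one {m n : ℕ} (X : Matrix (Fin m) (Fin n) ℂ) (h : X * Xᴴ = 1) (i : Fin m) :
    ∑ j, Complex.normSq (X i j) = 1 := by
  have := congrFun (congrFun h i) i
  rw [Matrix.mul_apply] at this
  simp only [Matrix.conjTranspose_apply, Matrix.one_apply_eq] at this
  apply Complex.ofReal_injective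
  push_cast
  rw [← this]
  refine Finset.sum_congr rfl fun j _ => ?_
  rw [← Complex.mul_conj]; rfl

lemma col_le {m n : ℕ} (X : Matrix (Fin m) (Fin n) ℂ) (h : X * Xᴴ = 1) (j : Fin n) :
    ∑ i, Complex.normSq (X i j) ≤ 1 := by
  have hps : ((1 - Xᴴ * X)ᴴ * (1 - Xᴴ * X)).PosSemidef := Matrix.posSemidef_conjTranspose_mul_self _
  have e : (1 - Xᴴ * X)ᴴ * (1 - Xᴴ * X) = 1 - Xᴴ * X := by
    have : Xᴴ * X * (Xᴴ * X) = Xᴴ * X := by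
      rw [Matrix.mul_assoc, ← Matrix.mul_assoc X, h, Matrix.one_mul]
    simp [Matrix.sub_mul, Matrix.mul_sub, this]
  rw [e] at hps
  have h2 := hps.diag_nonneg (i := j)
  have e2 : ((1 : Matrix (Fin n) (Fin n) ℂ) - Xᴴ * X) j j = ((1 - ∑ i, Complex.normSq (X i j) : ℝ) : ℂ) := by
    rw [Matrix.sub_apply, Matrix.mul_apply, Matrix.one_apply_eq]
    push_cast
    congr 1
    refine Finset.sum_congr rfl fun i _ => ?_
    rw [← Complex.mul_conj]; simp; ring
  rw [e2] at h2
  have := Complex.zero_le_real.mp h2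
  linarith

lemma spec_sorted {n : ℕ} (G : Matrix (Fin n) (Fin n) ℂ) (hG : G.PosDef) :
    ∃ (V : Matrix (Fin n) (Fin n) ℂ) (s : Fin n → ℝ), V * Vᴴ = 1 ∧ Vᴴ * V = 1 ∧ Antitone s ∧
      (∀ i, 0 < s i) ∧ G = V * Matrix.diagonal (fun i => (s i : ℂ)) * Vᴴ := by
  have hsp := hG.1.spectral_theorem
  set U : Matrix (Fin n) (Fin n) ℂ := (hG.1.eigenvectorUnitary : Matrix (Fin n) (Fin n) ℂ) with hU
  have hU1 : U * Uᴴ = 1 := Matrix.mem_unitaryGroup_iff.mp hG.1.eigenvectorUnitary.2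
  have hU2 : Uᴴ * U = 1 := Matrix.mem_unitaryGroup_iff'.mp hG.1.eigenvectorUnitary.2
  set l := hG.1.eigenvalues with hl
  let π := Tuple.sort (fun i => - l i)
  have hπ : Monotone ((fun i => - l i) ∘ π) := Tuple.monotone_sort _
  refine ⟨U.submatrix id π, fun i => l (π i), ?_, ?_, ?_, ?_, ?_⟩
  · rw [Matrix.conjTranspose_submatrix, Matrix.submatrix_mul_equiv, hU1]; simp
  · rw [Matrix.conjTranspose_submatrix]
    have := Matrix.submatrix_mul_equiv Uᴴ U π (Equiv.refl _) π
    simp only [Equiv.coe_refl] at this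
    rw [this, hU2]; simp
  · intro i j hij
    have := hπ hij
    simp at this; exact this
  · intro i; exact hG.eigenvalues_pos _
  · have e : Matrix.diagonal (fun i => ((l (π i) : ℝ) : ℂ)) =
        (Matrix.diagonal (fun i => (l i : ℂ))).submatrix π π := by
      rw [Matrix.submatrix_diagonal_equiv]; rfl
    rw [e, Matrix.conjTranspose_submatrix, Matrix.submatrix_mul_equiv, Matrix.submatrix_mul_equiv]
    rw [hsp]
    rfl

lemma core (n B : ℕ) (hB : n ≤ B) (Y : Matrix (Fin n) (Fin B) ℂ) (hG : (Y * Yᴴ).PosDef)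
    (DT : Fin n → ℝ) (hDT : Antitone DT) (hDT0 : ∀ i, 0 < DT i)
    (DQ : Fin B → ℝ) (hDQ : Monotone DQ) (hDQ0 : ∀ i, 0 < DQ i) :
    ∃ f p : ℝ, (Matrix.diagonal (fun i => (DT i : ℂ)) * (Y * Yᴴ)⁻¹).trace = (f : ℂ) ∧
      (Y * Matrix.diagonal (fun i => (DQ i : ℂ)) * Yᴴ).trace = (p : ℂ) ∧ 0 ≤ f ∧
      (∑ i, Real.sqrt (DT i * DQ (Fin.castLE hB i))) ^ 2 ≤ f * p := by
  obtain ⟨V, s, hV1, hV2, hs, hs0, hGe⟩ := spec_sorted _ hG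
  have hd : ∀ f g : Fin n → ℝ, (∀ i, f i * g i = 1) →
      Matrix.diagonal (fun i => (f i : ℂ)) * Matrix.diagonal (fun i => (g i : ℂ)) = 1 := by
    intro f g h
    rw [Matrix.diagonal_mul_diagonal, ← Matrix.diagonal_one]
    congr 1; ext i; exact_mod_cast h i
  have hinv : (Y * Yᴴ)⁻¹ = V * Matrix.diagonal (fun i => (((s i)⁻¹ : ℝ) : ℂ)) * Vᴴ := by
    apply Matrix.inv_eq_right_inv
    rw [hGe]
    calc V * Matrix.diagonal (fun i => (s i : ℂ)) * Vᴴ *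
          (V * Matrix.diagonal (fun i => (((s i)⁻¹ : ℝ) : ℂ)) * Vᴴ)
        = V * (Matrix.diagonal (fun i => (s i : ℂ)) * (Vᴴ * V) *
          Matrix.diagonal (fun i => (((s i)⁻¹ : ℝ) : ℂ))) * Vᴴ := by simp only [Matrix.mul_assoc]
      _ = 1 := by
        rw [hV2, Matrix.mul_one, hd s (fun i => (s i)⁻¹) (fun i => mul_inv_cancel₀ (hs0 i).ne'),
          Matrix.mul_one, hV1]
  set r : Fin n → ℝ := fun i => Real.sqrt (s i) with hr
  set q : Fin n → ℝ := fun i => (Real.sqrt (s i))⁻¹ with hq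
  have hr0 : ∀ i, 0 < r i := fun i => Real.sqrt_pos.mpr (hs0 i)
  have hrq : Matrix.diagonal (fun i => (r i : ℂ)) * Matrix.diagonal (fun i => (q i : ℂ)) = 1 :=
    hd r q (fun i => mul_inv_cancel₀ (hr0 i).ne')
  have hqr : Matrix.diagonal (fun i => (q i : ℂ)) * Matrix.diagonal (fun i => (r i : ℂ)) = 1 :=
    hd q r (fun i => inv_mul_cancel₀ (hr0 i).ne')
  have hrr : Matrix.diagonal (fun i => (r i : ℂ)) * Matrix.diagonal (fun i => (r i : ℂ)) =
      Matrix.diagonal (fun i => (s i : ℂ)) := by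
    rw [Matrix.diagonal_mul_diagonal]
    congr 1; ext i
    exact_mod_cast Real.mul_self_sqrt (hs0 i).le
  have hrH : (Matrix.diagonal (fun i => (r i : ℂ)))ᴴ = Matrix.diagonal (fun i => (r i : ℂ)) := by
    rw [Matrix.diagonal_conjTranspose]; congr 1; ext i; simp
  have hqH : (Matrix.diagonal (fun i => (q i : ℂ)))ᴴ = Matrix.diagonal (fun i => (q i : ℂ)) := by
    rw [Matrix.diagonal_conjTranspose]; congr 1; ext i; simp
  set R := Matrix.diagonal (fun i => (r i : ℂ)) with hR
  set Q := Matrix.diagonal (fun i => (q i : ℂ)) with hQ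
  let X : Matrix (Fin n) (Fin B) ℂ := Q * Vᴴ * Y
  have hX : X * Xᴴ = 1 := by
    calc X * Xᴴ = Q * Vᴴ * (Y * Yᴴ) * V * Q := by
          simp only [X, Matrix.conjTranspose_mul, hqH, Matrix.conjTranspose_conjTranspose,
            Matrix.mul_assoc]
      _ = Q * (Vᴴ * V) * (R * R) * (Vᴴ * V) * Q := by rw [hGe, hrr]; simp only [Matrix.mul_assoc]
      _ = (Q * R) * (R * Q) := by rw [hV2]; simp only [Matrix.mul_assoc, Matrix.mul_one, Matrix.one_mul]
      _ = 1 := by rw [hqr, hrq, Matrix.mul_one]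
  have hY : Y = V * R * X := by
    calc Y = V * (R * Q) * Vᴴ * Y := by rw [hrq, Matrix.mul_one, hV1, Matrix.one_mul]
      _ = _ := by simp only [X, Matrix.mul_assoc]
  have hp : (Y * Matrix.diagonal (fun i => (DQ i : ℂ)) * Yᴴ).trace =
      (Matrix.diagonal (fun i => (s i : ℂ)) *
        (X * Matrix.diagonal (fun i => (DQ i : ℂ)) * Xᴴ)).trace := by
    set D := Matrix.diagonal (fun i => (DQ i : ℂ))
    calc (Y * D * Yᴴ).trace = ((V * R * (X * D * Xᴴ) * R) * Vᴴ).trace := by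
          conv_lhs => rw [hY]
          simp only [Matrix.conjTranspose_mul, hrH, Matrix.mul_assoc]
      _ = ((Vᴴ * V) * R * (X * D * Xᴴ) * R).trace := by
          rw [Matrix.trace_mul_comm]; simp only [Matrix.mul_assoc]
      _ = _ := by
          rw [hV2, Matrix.one_mul, Matrix.trace_mul_comm, ← Matrix.mul_assoc, hrr]
  rw [hp, hinv, trace_diag_aux, trace_diag_aux]
  refine ⟨_, _, rfl, rfl, ?_, ?_⟩
  · refine Finset.sum_nonneg fun i _ => mul_nonneg (hDT0 i).le (Finset.sum_nonneg fun j _ =>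
      mul_nonneg (inv_nonneg.mpr (hs0 j).le) (Complex.normSq_nonneg _))
  have h1 := rearr n n le_rfl DT (fun i => (s i)⁻¹) (fun i j => Complex.normSq (V i j)) hDT
    (fun i => (hDT0 i).le) (fun i j hij => inv_anti₀ (hs0 _) (hs hij))
    (fun _ _ => Complex.normSq_nonneg _) (row_one V hV1) (col_le V hV1)
  have h2 := rearr n B hB s DQ (fun i j => Complex.normSq (X i j)) hs
    (fun i => (hs0 i).le) hDQ (fun _ _ => Complex.normSq_nonneg _) (row_one X hX) (col_le X hX)
  have e1 : 0 ≤ ∑ i, s i * DQ (Fin.castLE hB i) :=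
    Finset.sum_nonneg fun i _ => mul_nonneg (hs0 i).le (hDQ0 _).le
  have e0 : 0 ≤ ∑ i, DT i * (s (Fin.castLE le_rfl i))⁻¹ :=
    Finset.sum_nonneg fun i _ => mul_nonneg (hDT0 i).le (inv_nonneg.mpr (hs0 _).le)
  refine le_trans ?_ (mul_le_mul h1 h2 e1 (e0.trans h1))
  refine Finset.sum_sq_le_sum_mul_sum_of_sq_le_mul _ ?_ ?_ ?_
  · exact fun i _ => mul_nonneg (hDT0 i).le (inv_nonneg.mpr (hs0 _).le)
  · exact fun i _ => mul_nonneg (hs0 i).le (hDQ0 _).le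
  · intro i _
    refine le_of_eq ?_
    rw [Real.sq_sqrt (mul_nonneg (hDT0 i).le (hDQ0 _).le)]
    have := (hs0 i).ne'
    simp only [Fin.castLE_rfl, id]
    field_simp

lemma J_eq (nT nR B : ℕ) (IT : Matrix (Fin nT) (Fin nT) ℂ)
    (IR : Matrix (Fin nR) (Fin nR) ℂ) (SQ : Matrix (Fin B) (Fin B) ℂ)
    (SR : Matrix (Fin nR) (Fin nR) ℂ) (hSR : SR.PosDef) (P : Matrix (Fin nT) (Fin B) ℂ) :
    Jcost nT nR B IT IR SQ SR P = (IR * SR).trace *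
      (ITᵀ * ((Pᵀ)ᴴ * (SQᵀ)⁻¹ * (Pᵀ)ᴴᴴ)⁻¹).trace := by
  unfold Jcost
  have hu : IsUnit SR.det := (Matrix.isUnit_iff_isUnit_det _).mp hSR.isUnit
  rw [Matrix.conjTranspose_kronecker, Matrix.inv_kronecker, ← Matrix.mul_kronecker_mul,
    ← Matrix.mul_kronecker_mul, Matrix.inv_kronecker, ← Matrix.mul_kronecker_mul,
    Matrix.trace_kronecker, Matrix.conjTranspose_one, Matrix.one_mul, Matrix.mul_one,
    Matrix.nonsing_inv_nonsing_inv _ hu, mul_comm, Matrix.conjTranspose_conjTranspose]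

lemma trace_mul_nn {n : ℕ} (A S : Matrix (Fin n) (Fin n) ℂ) (hA : A.PosDef) (hS : S.PosDef) :
    ∃ t : ℝ, 0 ≤ t ∧ (A * S).trace = (t : ℂ) := by
  obtain ⟨V, s, hV1, hV2, hs, hs0, hGe⟩ := spec_sorted _ hA
  set r : Fin n → ℝ := fun i => Real.sqrt (s i) with hr
  set R := Matrix.diagonal (fun i => (r i : ℂ)) with hR
  have hrr : R * R = Matrix.diagonal (fun i => (s i : ℂ)) := by
    rw [hR, Matrix.diagonal_mul_diagonal]
    congr 1; ext i
    exact_mod_cast Real.mul_self_sqrt (hs0 i).le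
  have hrH : Rᴴ = R := by
    rw [hR, Matrix.diagonal_conjTranspose]; congr 1; ext i; simp
  have h := (hS.posSemidef.conjTranspose_mul_mul_same (V * R)).trace_nonneg
  have e : (A * S).trace = ((V * R)ᴴ * S * (V * R)).trace := by
    rw [Matrix.trace_mul_comm _ (V * R), hGe, ← hrr]
    simp only [Matrix.conjTranspose_mul, hrH, Matrix.mul_assoc]
  rw [← e] at h
  obtain ⟨h1, h2⟩ := Complex.nonneg_iff.mp h
  exact ⟨_, h1, Complex.ext rfl (by simp [← h2])⟩

lemma dec_pos {n : ℕ} (A U : Matrix (Fin n) (Fin n) ℂ) (hA : A.PosDef) (d : Fin n → ℝ)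
    (hU2 : Uᴴ * U = 1) (h : Aᵀ = U * Matrix.diagonal (fun i => (d i : ℂ)) * Uᴴ) :
    ∀ i, 0 < d i := by
  have h1 : (Uᴴ * Aᵀ * U).PosDef :=
    hA.transpose.conjTranspose_mul_mul_same
      (Matrix.mulVec_injective_of_isUnit (IsUnit.of_mul_eq_one_right _ hU2))
  have e : Uᴴ * Aᵀ * U = Matrix.diagonal (fun i => (d i : ℂ)) := by
    rw [h]
    calc _ = (Uᴴ * U) * Matrix.diagonal (fun i => (d i : ℂ)) * (Uᴴ * U) := by
          simp only [Matrix.mul_assoc]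
      _ = _ := by rw [hU2, Matrix.one_mul, Matrix.mul_one]
  rw [e, Matrix.posDef_diagonal_iff] at h1
  intro i
  exact Complex.zero_lt_real.mp (h1 i)

lemma vecMul_inj {n B : ℕ} (A : Matrix (Fin n) (Fin B) ℂ) (h : A.rank = n) :
    Function.Injective A.vecMul := by
  rw [Matrix.vecMul_injective_iff, linearIndependent_iff_card_eq_finrank_span, Set.finrank,
    ← Matrix.rank_eq_finrank_span_row, h, Fintype.card_fin]

lemma reduct {n B : ℕ} (A : Matrix (Fin n) (Fin B) ℂ)
    (UT : Matrix (Fin n) (Fin n) ℂ) (hT1 : UT * UTᴴ = 1) (hT2 : UTᴴ * UT = 1)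
    (UQ : Matrix (Fin B) (Fin B) ℂ) (hQ1 : UQ * UQᴴ = 1) (hQ2 : UQᴴ * UQ = 1)
    (DT : Matrix (Fin n) (Fin n) ℂ) (DQ : Fin B → ℝ) (hDQ0 : ∀ i, 0 < DQ i)
    (Y : Matrix (Fin n) (Fin B) ℂ)
    (hY : Y = UTᴴ * A * UQ * Matrix.diagonal (fun i => (((Real.sqrt (DQ i))⁻¹ : ℝ) : ℂ)))
    (SI : Matrix (Fin B) (Fin B) ℂ)
    (hSI : SI = (UQ * Matrix.diagonal (fun i => (DQ i : ℂ)) * UQᴴ)⁻¹) :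
    Y * Yᴴ = UTᴴ * (A * SI * Aᴴ) * UT ∧
    (UT * DT * UTᴴ * (A * SI * Aᴴ)⁻¹).trace = (DT * (Y * Yᴴ)⁻¹).trace ∧
    (Y * Matrix.diagonal (fun i => (DQ i : ℂ)) * Yᴴ).trace = (A * Aᴴ).trace := by
  set D := Matrix.diagonal (fun i => (DQ i : ℂ)) with hD
  set q := Matrix.diagonal (fun i => (((Real.sqrt (DQ i))⁻¹ : ℝ) : ℂ)) with hq
  have hqH : qᴴ = q := by
    rw [hq, Matrix.diagonal_conjTranspose]; congr 1; ext i; simp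
  have hc : ∀ i, (((Real.sqrt (DQ i))⁻¹ : ℝ) : ℂ) * (DQ i : ℂ) *
      (((Real.sqrt (DQ i))⁻¹ : ℝ) : ℂ) = 1 := by
    intro i
    have h1 := Real.mul_self_sqrt (hDQ0 i).le
    have h2 : (0 : ℝ) < Real.sqrt (DQ i) := Real.sqrt_pos.mpr (hDQ0 i)
    norm_cast
    nth_rewrite 2 [← h1]
    field_simp
  have hqDq : q * D * q = 1 := by
    rw [hq, hD, Matrix.diagonal_mul_diagonal, Matrix.diagonal_mul_diagonal, ← Matrix.diagonal_one]
    congr 1; ext i; exact hc i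
  have hDqq : D * (q * q) = 1 := by
    rw [hq, hD, Matrix.diagonal_mul_diagonal, Matrix.diagonal_mul_diagonal, ← Matrix.diagonal_one]
    congr 1; ext i; rw [← hc i]; ring
  have hSI' : SI = UQ * (q * q) * UQᴴ := by
    rw [hSI]
    apply Matrix.inv_eq_right_inv
    calc UQ * D * UQᴴ * (UQ * (q * q) * UQᴴ) = UQ * (D * (UQᴴ * UQ) * (q * q)) * UQᴴ := by
          simp only [Matrix.mul_assoc]
      _ = 1 := by rw [hQ2, Matrix.mul_one, hDqq, Matrix.mul_one, hQ1]
  have hYY : Y * Yᴴ = UTᴴ * (A * SI * Aᴴ) * UT := by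
    rw [hY, hSI']
    simp only [Matrix.conjTranspose_mul, hqH, Matrix.conjTranspose_conjTranspose, Matrix.mul_assoc]
  refine ⟨hYY, ?_, ?_⟩
  · have i1 : UT⁻¹ = UTᴴ := Matrix.inv_eq_right_inv hT1
    have i2 : UTᴴ⁻¹ = UT := Matrix.inv_eq_right_inv hT2
    rw [hYY, Matrix.mul_inv_rev, Matrix.mul_inv_rev, i1, i2]
    rw [Matrix.mul_assoc, Matrix.mul_assoc, Matrix.trace_mul_comm]
    simp only [Matrix.mul_assoc]
  · calc (Y * D * Yᴴ).trace = (UTᴴ * (A * UQ * (q * D * q) * UQᴴ * Aᴴ * UT)).trace := by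
          rw [hY]
          simp only [Matrix.conjTranspose_mul, hqH, Matrix.conjTranspose_conjTranspose,
            Matrix.mul_assoc]
      _ = (A * (UQ * UQᴴ) * Aᴴ * (UT * UTᴴ)).trace := by
          rw [hqDq, Matrix.trace_mul_comm]
          simp only [Matrix.mul_assoc, Matrix.mul_one, Matrix.one_mul]
      _ = _ := by rw [hQ1, hT1, Matrix.mul_one, Matrix.mul_one]

lemma rect_diag {n B : ℕ} (hB : n ≤ B) (D : Matrix (Fin n) (Fin B) ℂ) (p : Fin n → ℝ)
    (hD : ∀ (i : Fin n) (j : Fin B), D i j = if (i : ℕ) = (j : ℕ) then (p i : ℂ) else 0)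
    (d : Fin B → ℂ) :
    D * Matrix.diagonal d * Dᴴ =
      Matrix.diagonal (fun i => (p i : ℂ) * (p i : ℂ) * d (Fin.castLE hB i)) := by
  ext i k
  rw [Matrix.mul_apply, Finset.sum_eq_single (Fin.castLE hB i)]
  · simp only [Matrix.mul_diagonal, Matrix.conjTranspose_apply, hD, Matrix.diagonal_apply]
    by_cases h : i = k
    · subst h; simp; ring
    · have : ¬ ((k : ℕ) = (i : ℕ)) := fun h' => h (Fin.ext h'.symm)
      simp [h, this]
  · intro j _ hj
    rw [Matrix.mul_diagonal, hD, if_neg]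
    · simp
    · intro h; exact hj (Fin.ext h.symm)
  · simp

/-- Theorem 4: the training matrix `P_opt = (U_T D_P U_Qᴴ)^*` minimizes
`J(P) = tr[𝓘_adm (P̃ᴴ S⁻¹ P̃)⁻¹]` subject to the energy budget `tr(P Pᴴ) ≤ Pbudget`,
uses the full budget, and attains the value `tr(𝓘_R S_R) (Σ_i √α_i)² / Pbudget`. -/
theorem stmt6 (nT nR B : ℕ) (hnT : 1 ≤ nT) (hnR : 1 ≤ nR) (hBnT : nT ≤ B)
    (IT : Matrix (Fin nT) (Fin nT) ℂ) (hIT : IT.PosDef)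
    (IR : Matrix (Fin nR) (Fin nR) ℂ) (hIR : IR.PosDef)
    (SQ : Matrix (Fin B) (Fin B) ℂ) (hSQ : SQ.PosDef)
    (SR : Matrix (Fin nR) (Fin nR) ℂ) (hSR : SR.PosDef)
    (Pbudget : ℝ) (hPbudget : 0 < Pbudget)
    (UT : Matrix (Fin nT) (Fin nT) ℂ) (hUT : UT ∈ Matrix.unitaryGroup (Fin nT) ℂ)
    (DT : Fin nT → ℝ) (hDTanti : Antitone DT)
    (hITdec : ITᵀ = UT * Matrix.diagonal (fun i => (DT i : ℂ)) * UTᴴ)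
    (UQ : Matrix (Fin B) (Fin B) ℂ) (hUQ : UQ ∈ Matrix.unitaryGroup (Fin B) ℂ)
    (DQ : Fin B → ℝ) (hDQmono : Monotone DQ)
    (hSQdec : SQᵀ = UQ * Matrix.diagonal (fun i => (DQ i : ℂ)) * UQᴴ)
    (α : Fin nT → ℝ) (hα : ∀ i, α i = DT i * DQ (Fin.castLE hBnT i))
    (DP : Matrix (Fin nT) (Fin B) ℂ)
    (hDP : ∀ (i : Fin nT) (j : Fin B), DP i j = if (i : ℕ) = (j : ℕ) then
        (Real.sqrt (Pbudget * Real.sqrt (α i) / ∑ k, Real.sqrt (α k)) : ℂ) else 0)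
    (Popt : Matrix (Fin nT) (Fin B) ℂ)
    (hPopt : Popt = (UT * DP * UQᴴ).map (starRingEnd ℂ)) :
    Popt.rank = nT ∧
    (Popt * Poptᴴ).trace = (Pbudget : ℂ) ∧
    Jcost nT nR B IT IR SQ SR Popt =
      (IR * SR).trace * (((∑ i, Real.sqrt (α i)) ^ 2 / Pbudget : ℝ) : ℂ) ∧
    ∀ P : Matrix (Fin nT) (Fin B) ℂ, P.rank = nT → ((P * Pᴴ).trace).re ≤ Pbudget →
      (Jcost nT nR B IT IR SQ SR Popt).re ≤ (Jcost nT nR B IT IR SQ SR P).re := by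

  obtain ⟨hT1, hT2⟩ : UT * UTᴴ = 1 ∧ UTᴴ * UT = 1 :=
    ⟨Matrix.mem_unitaryGroup_iff.mp hUT, Matrix.mem_unitaryGroup_iff'.mp hUT⟩
  obtain ⟨hQ1, hQ2⟩ : UQ * UQᴴ = 1 ∧ UQᴴ * UQ = 1 :=
    ⟨Matrix.mem_unitaryGroup_iff.mp hUQ, Matrix.mem_unitaryGroup_iff'.mp hUQ⟩
  have hDT0 := dec_pos IT UT hIT DT hT2 hITdec
  have hDQ0 := dec_pos SQ UQ hSQ DQ hQ2 hSQdec
  have hα0 : ∀ i, 0 < α i := fun i => by rw [hα]; exact mul_pos (hDT0 _) (hDQ0 _)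
  have hsα : ∀ i, 0 < Real.sqrt (α i) := fun i => Real.sqrt_pos.mpr (hα0 i)
  haveI : Nonempty (Fin nT) := ⟨⟨0, hnT⟩⟩
  set S : ℝ := ∑ i, Real.sqrt (α i) with hS
  have hS0 : 0 < S := Finset.sum_pos (fun i _ => hsα i) Finset.univ_nonempty
  obtain ⟨t, ht0, ht⟩ := trace_mul_nn IR SR hIR hSR
  -- trace relation
  have htr : ∀ P : Matrix (Fin nT) (Fin B) ℂ, (P * Pᴴ).trace = ((Pᵀ)ᴴ * (Pᵀ)ᴴᴴ).trace := by
    intro P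
    rw [← Matrix.trace_transpose, Matrix.transpose_mul, Matrix.conjTranspose_conjTranspose]
    rfl
  have hrk : ∀ P : Matrix (Fin nT) (Fin B) ℂ, ((Pᵀ)ᴴ).rank = P.rank := by
    intro P
    rw [Matrix.rank_conjTranspose, Matrix.rank_transpose]
  set p : Fin nT → ℝ := fun i => Real.sqrt (Pbudget * Real.sqrt (α i) / S) with hp
  have hpp : ∀ i, p i * p i = Pbudget * Real.sqrt (α i) / S := fun i =>
    Real.mul_self_sqrt (div_nonneg (mul_nonneg hPbudget.le (hsα i).le) hS0.le)
  have hpp0 : ∀ i, 0 < p i * p i := fun i => by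
    rw [hpp]; exact div_pos (mul_pos hPbudget (hsα i)) hS0
  have hrd := rect_diag hBnT DP p hDP
  have hA : (Poptᵀ)ᴴ = UT * DP * UQᴴ := by
    rw [hPopt]; ext i j
    simp only [Matrix.conjTranspose_apply, Matrix.transpose_apply, Matrix.map_apply]
    exact star_star _
  have hAA : (Poptᵀ)ᴴ * (Poptᵀ)ᴴᴴ =
      UT * Matrix.diagonal (fun i => ((p i * p i : ℝ) : ℂ)) * UTᴴ := by
    have h1 := hrd 1
    have e1 : Matrix.diagonal (1 : Fin B → ℂ) = 1 := Matrix.diagonal_one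
    rw [e1, Matrix.mul_one] at h1
    calc (Poptᵀ)ᴴ * (Poptᵀ)ᴴᴴ = UT * (DP * (UQᴴ * UQ) * DPᴴ) * UTᴴ := by
          rw [hA]
          simp only [Matrix.conjTranspose_mul, Matrix.conjTranspose_conjTranspose, Matrix.mul_assoc]
      _ = _ := by
          rw [hQ2, Matrix.mul_one, h1]
          simp
  have hJopt : Jcost nT nR B IT IR SQ SR Popt =
      (IR * SR).trace * ((S ^ 2 / Pbudget : ℝ) : ℂ) := by
    rw [J_eq _ _ _ _ _ _ _ hSR]
    congr 1
    obtain ⟨-, h2, -⟩ := reduct ((Poptᵀ)ᴴ) UT hT1 hT2 UQ hQ1 hQ2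
      (Matrix.diagonal (fun i => (DT i : ℂ))) DQ hDQ0 _ rfl _ rfl
    rw [← hSQdec, ← hITdec] at h2
    rw [h2]
    set q := Matrix.diagonal (fun i => (((Real.sqrt (DQ i))⁻¹ : ℝ) : ℂ)) with hq
    have hqH : qᴴ = q := by
      rw [hq, Matrix.diagonal_conjTranspose]; congr 1; ext i; simp
    have hqq : q * q = Matrix.diagonal (fun i => (((DQ i)⁻¹ : ℝ) : ℂ)) := by
      rw [hq, Matrix.diagonal_mul_diagonal]
      congr 1; ext i
      norm_cast
      rw [← mul_inv, Real.mul_self_sqrt (hDQ0 i).le]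
    have e1 : UTᴴ * (Poptᵀ)ᴴ * UQ * q = DP * q := by
      rw [hA]
      calc UTᴴ * (UT * DP * UQᴴ) * UQ * q = (UTᴴ * UT) * DP * (UQᴴ * UQ) * q := by
            simp only [Matrix.mul_assoc]
        _ = _ := by rw [hT2, hQ2, Matrix.one_mul, Matrix.mul_one]
    have e2 : DP * q * (DP * q)ᴴ = Matrix.diagonal
        (fun i => ((p i * p i * (DQ (Fin.castLE hBnT i))⁻¹ : ℝ) : ℂ)) := by
      calc DP * q * (DP * q)ᴴ = DP * (q * q) * DPᴴ := by
            simp only [Matrix.conjTranspose_mul, hqH, Matrix.mul_assoc]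
        _ = _ := by
            rw [hqq, hrd]; congr 1; ext i; push_cast; ring
    have e3 : (DP * q * (DP * q)ᴴ)⁻¹ = Matrix.diagonal
        (fun i => ((p i * p i * (DQ (Fin.castLE hBnT i))⁻¹ : ℝ) : ℂ)⁻¹) := by
      apply Matrix.inv_eq_right_inv
      rw [e2, Matrix.diagonal_mul_diagonal, ← Matrix.diagonal_one]
      congr 1; ext i
      apply mul_inv_cancel₀
      exact_mod_cast (mul_pos (hpp0 i) (inv_pos.mpr (hDQ0 _))).ne'
    rw [e1, e3, Matrix.diagonal_mul_diagonal, Matrix.trace_diagonal]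
    have e4 : ∀ i, (DT i : ℂ) * ((p i * p i * (DQ (Fin.castLE hBnT i))⁻¹ : ℝ) : ℂ)⁻¹ =
        ((Real.sqrt (α i) * (S / Pbudget) : ℝ) : ℂ) := by
      intro i
      rw [hpp, ← Complex.ofReal_inv, ← Complex.ofReal_mul]
      congr 1
      have h1 := hsα i
      have h2 := hDQ0 (Fin.castLE hBnT i)
      have h3 : DT i * DQ (Fin.castLE hBnT i) = Real.sqrt (α i) * Real.sqrt (α i) := by
        rw [Real.mul_self_sqrt (hα0 i).le, hα]
      rw [eq_comm, mul_inv, inv_inv, inv_div]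
      field_simp
      nlinarith [h3]
    simp_rw [e4]
    rw [← Complex.ofReal_sum, ← Finset.sum_mul, ← hS]
    congr 1; ring
  refine ⟨?_, ?_, hJopt, ?_⟩
  · rw [← hrk, ← Matrix.rank_self_mul_conjTranspose, hAA]
    have hu : IsUnit (UT * Matrix.diagonal (fun i => ((p i * p i : ℝ) : ℂ)) * UTᴴ) := by
      refine IsUnit.mul (IsUnit.mul (IsUnit.of_mul_eq_one _ hT1) ?_) (IsUnit.of_mul_eq_one _ hT2)
      have : (Matrix.diagonal (fun i => ((p i * p i : ℝ) : ℂ))).PosDef :=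
        Matrix.posDef_diagonal_iff.mpr fun i => Complex.zero_lt_real.mpr (hpp0 i)
      exact this.isUnit
    rw [Matrix.rank_of_isUnit _ hu, Fintype.card_fin]
  · rw [htr, hAA, Matrix.trace_mul_comm, ← Matrix.mul_assoc, hT2, Matrix.one_mul,
      Matrix.trace_diagonal, ← Complex.ofReal_sum]
    congr 1
    simp_rw [hpp]
    rw [← Finset.sum_div, ← Finset.mul_sum, ← hS]
    field_simp
  · intro P hP hPb
    rw [hJopt, J_eq _ _ _ _ _ _ _ hSR]
    obtain ⟨h1, h2, h3⟩ := reduct ((Pᵀ)ᴴ) UT hT1 hT2 UQ hQ1 hQ2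
      (Matrix.diagonal (fun i => (DT i : ℂ))) DQ hDQ0 _ rfl _ rfl
    rw [← hSQdec] at h1 h2
    rw [← hITdec] at h2
    rw [← htr] at h3
    have hM : ((Pᵀ)ᴴ * (SQᵀ)⁻¹ * (Pᵀ)ᴴᴴ).PosDef :=
      hSQ.transpose.inv.mul_mul_conjTranspose_same (vecMul_inj _ ((hrk P).trans hP))
    have hG := hM.conjTranspose_mul_mul_same (B := UT)
      (Matrix.mulVec_injective_of_isUnit (IsUnit.of_mul_eq_one _ hT1))
    rw [← h1] at hG
    obtain ⟨f, b, hf, hb, hf0, hfb⟩ := core nT B hBnT _ hG DT hDTanti hDT0 DQ hDQmono hDQ0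
    rw [h2, hf, ht, ← Complex.ofReal_mul, ← Complex.ofReal_mul, Complex.ofReal_re,
      Complex.ofReal_re]
    rw [h3] at hb
    rw [hb, Complex.ofReal_re] at hPb
    refine mul_le_mul_of_nonneg_left ?_ ht0
    rw [div_le_iff₀ hPbudget]
    simp_rw [← hα] at hfb
    exact hfb.trans (mul_le_mul_of_nonneg_left hPb hf0)
end

section
/- Let A, B ∈ ℂ^{n×n} be Hermitian matrices. Let a_1 ≥ a_2 ≥ … ≥ a_n be the eigenvalues of A arranged in descending order and let b_1 ≤ b_2 ≤ … ≤ b_n be the eigenvalues of B arranged in ascending order. Then the (real) trace of the product satisfies tr(A B) ≥ Σ_{i=1}^n a_i b_i. (Lemma 3, inequality part.) -/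
open Matrix Finset

lemma aux_ds (n : ℕ) (a b : Fin n → ℝ) (ha : Antitone a) (hb : Monotone b)
    (M : Matrix (Fin n) (Fin n) ℝ) (hM : M ∈ doublyStochastic ℝ (Fin n)) :
    ∑ i, a i * b i ≤ ∑ i, ∑ j, a i * b j * M i j := by
  obtain ⟨w, hw0, hw1, rfl⟩ := exists_eq_sum_perm_of_mem_doublyStochastic hM
  have hav : Antivary a b := ha.antivary hb
  have h1 : ∑ i, ∑ j, a i * b j * (∑ σ, w σ • σ.permMatrix ℝ : Matrix (Fin n) (Fin n) ℝ) i j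
      = ∑ σ : Equiv.Perm (Fin n), w σ * ∑ i, a i * b (σ i) := by
    simp only [Matrix.sum_apply, Matrix.smul_apply, Finset.mul_sum, smul_eq_mul]
    rw [Finset.sum_congr rfl fun i _ => Finset.sum_comm, Finset.sum_comm]
    refine Finset.sum_congr rfl fun σ _ => Finset.sum_congr rfl fun i _ => ?_
    simp [Equiv.Perm.permMatrix, PEquiv.toMatrix_apply]
    ring
  rw [h1]
  calc ∑ i, a i * b i = ∑ σ : Equiv.Perm (Fin n), w σ * ∑ i, a i * b i := by
        rw [← Finset.sum_mul, hw1, one_mul]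
    _ ≤ _ := Finset.sum_le_sum fun σ _ =>
        mul_le_mul_of_nonneg_left hav.sum_mul_le_sum_mul_comp_perm (hw0 σ)

lemma aux_row (n : ℕ) (W : Matrix (Fin n) (Fin n) ℂ) (h : W * Wᴴ = 1) (i : Fin n) :
    ∑ j, Complex.normSq (W i j) = 1 := by
  have := congrFun (congrFun h i) i
  simp only [Matrix.mul_apply, Matrix.conjTranspose_apply, Matrix.one_apply_eq,
    Complex.star_def, Complex.mul_conj] at this
  exact_mod_cast this

lemma aux_trace (n : ℕ) (d e : Fin n → ℝ) (W : Matrix (Fin n) (Fin n) ℂ) :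
    ((diagonal (fun i => (d i : ℂ)) * W * diagonal (fun i => (e i : ℂ)) * Wᴴ).trace).re
      = ∑ i, ∑ j, d i * e j * Complex.normSq (W i j) := by
  simp only [Matrix.trace, Matrix.diag_apply, Matrix.mul_apply (N := Wᴴ), Matrix.mul_diagonal,
    Matrix.diagonal_mul, Matrix.conjTranspose_apply, Complex.re_sum]
  refine Finset.sum_congr rfl fun i _ => Finset.sum_congr rfl fun j _ => ?_
  have : (d i : ℂ) * W i j * (e j : ℂ) * star (W i j)
      = ((d i * e j * Complex.normSq (W i j) : ℝ) : ℂ) := by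
    push_cast
    rw [← Complex.mul_conj, Complex.star_def]; ring
  rw [this, Complex.ofReal_re]

/-- Lemma 3 (inequality part): for Hermitian `A`, `B` with eigenvalues `a` arranged in
descending order and `b` arranged in ascending order, `tr(A B) ≥ Σ_i a_i b_i`. -/
theorem stmt9 (n : ℕ) (A B : Matrix (Fin n) (Fin n) ℂ)
    (hA : A.IsHermitian) (hB : B.IsHermitian)
    (a b : Fin n → ℝ) (ha : Antitone a) (hb : Monotone b)
    (σ : Equiv.Perm (Fin n)) (hσ : ∀ i, a i = hA.eigenvalues (σ i))
    (τ : Equiv.Perm (Fin n)) (hτ : ∀ i, b i = hB.eigenvalues (τ i)) :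
    ∑ i, a i * b i ≤ ((A * B).trace).re := by
  obtain ⟨U, hU1, hU2, hAe⟩ : ∃ U : Matrix (Fin n) (Fin n) ℂ, U * Uᴴ = 1 ∧ Uᴴ * U = 1 ∧
      A = U * diagonal (fun i => (hA.eigenvalues i : ℂ)) * Uᴴ :=
    ⟨hA.eigenvectorUnitary, Unitary.mul_star_self_of_mem hA.eigenvectorUnitary.2,
      Unitary.star_mul_self_of_mem hA.eigenvectorUnitary.2, hA.spectral_theorem⟩
  obtain ⟨V, hV1, hV2, hBe⟩ : ∃ U : Matrix (Fin n) (Fin n) ℂ, U * Uᴴ = 1 ∧ Uᴴ * U = 1 ∧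
      B = U * diagonal (fun i => (hB.eigenvalues i : ℂ)) * Uᴴ :=
    ⟨hB.eigenvectorUnitary, Unitary.mul_star_self_of_mem hB.eigenvectorUnitary.2,
      Unitary.star_mul_self_of_mem hB.eigenvectorUnitary.2, hB.spectral_theorem⟩
  generalize hA.eigenvalues = d at *
  generalize hB.eigenvalues = e at *
  set W := Uᴴ * V with hW
  have hWH : Wᴴ = Vᴴ * U := by simp [hW]
  have hW1 : W * Wᴴ = 1 := by
    rw [hWH, hW, Matrix.mul_assoc, ← Matrix.mul_assoc V, hV1, Matrix.one_mul, hU2]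
  have hW2 : Wᴴ * Wᴴᴴ = 1 := by
    rw [conjTranspose_conjTranspose, hWH, hW, Matrix.mul_assoc, ← Matrix.mul_assoc U, hU1,
      Matrix.one_mul, hV2]
  have htr : (A * B).trace = (diagonal (fun i => (d i : ℂ)) * W *
      diagonal (fun i => (e i : ℂ)) * Wᴴ).trace := by
    rw [hAe, hBe, hWH, hW, Matrix.mul_assoc, Matrix.mul_assoc, Matrix.trace_mul_comm]
    simp only [Matrix.mul_assoc]
  have hrow := aux_row n W hW1
  have hcol : ∀ j, ∑ i, Complex.normSq (W i j) = 1 := fun j => by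
    simpa [Complex.normSq_conj] using aux_row n Wᴴ hW2 j
  rw [htr, aux_trace]
  refine (aux_ds n a b ha hb (Matrix.of fun i j => Complex.normSq (W (σ i) (τ j))) ?_).trans_eq ?_
  · rw [mem_doublyStochastic_iff_sum]
    refine ⟨fun i j => Complex.normSq_nonneg _, fun i => ?_, fun j => ?_⟩
    · simpa using (Equiv.sum_comp τ fun j => Complex.normSq (W (σ i) j)).trans (hrow _)
    · simpa using (Equiv.sum_comp σ fun i => Complex.normSq (W i (τ j))).trans (hcol _)
  · simp only [hσ, hτ, Matrix.of_apply]
    rw [← Equiv.sum_comp σ fun i => ∑ j, d i * e j * Complex.normSq (W i j)]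
    refine Finset.sum_congr rfl fun i _ => ?_
    exact Equiv.sum_comp τ fun j => d (σ i) * e j * Complex.normSq (W (σ i) j)
end

section
/- Let A, B ∈ ℂ^{n×n} be Hermitian matrices and suppose B = diag(b_1, …, b_n) is diagonal with distinct real entries b_1 < b_2 < … < b_n, and suppose A has distinct eigenvalues a_1 > a_2 > … > a_n. Then tr(A B) = Σ_{i=1}^n a_i b_i if and only if A = diag(a_1, …, a_n). (Lemma 3, equality characterization.) -/
open Matrix Finset

lemma ds_offdiag {n : ℕ} (S : Matrix (Fin n) (Fin n) ℝ) (hS : S ∈ doublyStochastic ℝ (Fin n))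
    (b a : Fin n → ℝ) (hb : StrictMono b) (ha : StrictAnti a)
    (h : ∑ i, b i * ∑ j, S i j * a j = ∑ i, b i * a i) (i j : Fin n) (hij : i ≠ j) :
    S i j = 0 := by
  obtain ⟨w, hw0, hw1, hw⟩ := exists_eq_sum_perm_of_mem_doublyStochastic hS
  have hSa : ∀ i j, S i j = ∑ π : Equiv.Perm (Fin n), w π * (if π i = j then 1 else 0) := by
    intro i j
    rw [← hw, Matrix.sum_apply]
    refine Finset.sum_congr rfl fun π _ => ?_
    simp [PEquiv.toMatrix_apply, Equiv.toPEquiv_apply, eq_comm]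
  have hav : Antivary b a := by
    intro i j hlt
    exact hb.monotone (le_of_lt (ha.lt_iff_gt.1 hlt))
  have h1 : ∑ i, b i * ∑ j, S i j * a j
      = ∑ π : Equiv.Perm (Fin n), w π * ∑ i, b i * a (π i) := by
    have : ∀ i, ∑ j, S i j * a j = ∑ π : Equiv.Perm (Fin n), w π * a (π i) := by
      intro i
      simp_rw [hSa, Finset.sum_mul]
      rw [Finset.sum_comm]
      refine Finset.sum_congr rfl fun π _ => ?_
      simp
    simp_rw [this, Finset.mul_sum]
    rw [Finset.sum_comm]
    refine Finset.sum_congr rfl fun π _ => Finset.sum_congr rfl fun i _ => by ring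
  have h2 : ∑ π : Equiv.Perm (Fin n), w π * (∑ i, b i * a (π i) - ∑ i, b i * a i) = 0 := by
    simp_rw [mul_sub]
    rw [Finset.sum_sub_distrib, ← h1, ← Finset.sum_mul, hw1, h]
    ring
  rw [Finset.sum_eq_zero_iff_of_nonneg (fun π _ => mul_nonneg (hw0 π)
    (sub_nonneg.2 hav.sum_mul_le_sum_mul_comp_perm))] at h2
  rw [hSa]
  refine Finset.sum_eq_zero fun π _ => ?_
  rcases mul_eq_zero.1 (h2 π (Finset.mem_univ _)) with h3 | h3
  · simp [h3]
  · have h4 := hav.sum_mul_eq_sum_mul_comp_perm_iff.1 (sub_eq_zero.1 h3)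
    have h5 : π = 1 := by
      rw [← Equiv.Perm.monotone_iff]
      intro x y hxy
      by_contra hlt
      push Not at hlt
      have h6 := hb.le_iff_le.1 (h4 (show (a ∘ π) x < (a ∘ π) y from ha hlt))
      have := le_antisymm hxy h6
      subst this
      exact lt_irrefl _ hlt
    simp [h5, hij]

/-- Lemma 3 (equality characterization): if `B = diag(b_1, …, b_n)` with strictly
increasing real entries and the Hermitian matrix `A` has strictly decreasing (distinct)
eigenvalues `a_1 > … > a_n`, then `tr(A B) = Σ_i a_i b_i` iff `A = diag(a_1, …, a_n)`. -/
theorem stmt10 (n : ℕ) (A : Matrix (Fin n) (Fin n) ℂ) (hA : A.IsHermitian)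
    (b : Fin n → ℝ) (hb : StrictMono b)
    (B : Matrix (Fin n) (Fin n) ℂ) (hBdef : B = Matrix.diagonal (fun i => (b i : ℂ)))
    (a : Fin n → ℝ) (ha : StrictAnti a)
    (σ : Equiv.Perm (Fin n)) (hσ : ∀ i, a i = hA.eigenvalues (σ i)) :
    (A * B).trace = ((∑ i, a i * b i : ℝ) : ℂ) ↔
      A = Matrix.diagonal (fun i => (a i : ℂ)) := by
  subst hBdef
  constructor
  swap
  · intro h
    conv_lhs => rw [h]
    simp [Matrix.diagonal_mul_diagonal, Matrix.trace_diagonal]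
  intro h
  obtain ⟨U, hU⟩ : ∃ U : Matrix (Fin n) (Fin n) ℂ, U = hA.eigenvectorUnitary := ⟨_, rfl⟩
  have hU1 : U * star U = 1 := by rw [hU]; simp
  have hU2 : star U * U = 1 := by rw [hU]; simp
  have hAU : A = U * diagonal (fun i => (hA.eigenvalues i : ℂ)) * star U := by
    conv_lhs => rw [hA.spectral_theorem, Unitary.conjStarAlgAut_apply]
    rw [hU]; rfl
  have hent : ∀ i k, A i k = ∑ j, U i (σ j) * (a j : ℂ) * star (U k (σ j)) := by
    intro i k
    conv_lhs => rw [hAU]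
    rw [Matrix.mul_apply, ← Equiv.sum_comp σ]
    refine Finset.sum_congr rfl fun j _ => ?_
    simp [Matrix.mul_diagonal, Matrix.star_apply, hσ]
  let S : Matrix (Fin n) (Fin n) ℝ := fun i j => Complex.normSq (U i (σ j))
  have hrow : ∀ i, ∑ j, S i j = 1 := by
    intro i
    have := congrFun (congrFun hU1 i) i
    rw [Matrix.mul_apply, ← Equiv.sum_comp σ] at this
    apply Complex.ofReal_injective
    simpa [S, Matrix.star_apply, Complex.mul_conj] using this
  have hcol : ∀ j, ∑ i, S i j = 1 := by
    intro j
    have := congrFun (congrFun hU2 (σ j)) (σ j)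
    rw [Matrix.mul_apply] at this
    apply Complex.ofReal_injective
    simpa [S, Matrix.star_apply, Complex.mul_conj, mul_comm] using this
  have hS : S ∈ doublyStochastic ℝ (Fin n) :=
    mem_doublyStochastic_iff_sum.2 ⟨fun i j => Complex.normSq_nonneg _, hrow, hcol⟩
  have hdiag : ∀ i, A i i = ((∑ j, S i j * a j : ℝ) : ℂ) := by
    intro i
    rw [hent]
    push_cast
    refine Finset.sum_congr rfl fun j _ => ?_
    simp only [S, ← Complex.mul_conj, Complex.star_def]
    ring
  have hz : ∀ i j, i ≠ j → S i j = 0 := by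
    refine ds_offdiag S hS b a hb ha ?_
    apply Complex.ofReal_injective
    rw [show (∑ i, b i * a i) = ∑ i, a i * b i from
      Finset.sum_congr rfl fun i _ => mul_comm _ _, ← h]
    rw [Matrix.trace, Complex.ofReal_sum]
    refine Finset.sum_congr rfl fun i _ => ?_
    rw [Matrix.diag_apply, Matrix.mul_diagonal, hdiag, Complex.ofReal_mul, mul_comm]
  have hz' : ∀ i j, i ≠ j → U i (σ j) = 0 := fun i j hij => Complex.normSq_eq_zero.1 (hz i j hij)
  ext i k
  by_cases hik : i = k
  · subst hik
    have h1 := hrow i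
    rw [Finset.sum_eq_single i (fun j _ hj => hz i j hj.symm) (by simp)] at h1
    rw [hdiag, Finset.sum_eq_single i (fun j _ hj => by rw [hz i j hj.symm, zero_mul]) (by simp), h1]
    simp
  · rw [hent, Matrix.diagonal_apply_ne _ hik]
    refine Finset.sum_eq_zero fun j _ => ?_
    by_cases hij : i = j
    · subst hij
      rw [hz' k i (Ne.symm hik)]; simp
    · rw [hz' i j hij]; simp
end

section
/- Let M, B ∈ ℂ^{n×n} be Hermitian with B positive semidefinite, and let C ∈ ℂ^{m×m} be Hermitian (m ≥ 1), with largest eigenvalue λ_max(C). Then M ⊗ I_m ⪰ B ⊗ C holds if and only if M ⪰ λ_max(C) B. (Lemma 4, matrix form: the set of matrices M satisfying the Kronecker inequality coincides with the set satisfying the reduced inequality.) -/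
open Matrix Finset
open scoped ComplexOrder Kronecker

/-- The largest eigenvalue of a Hermitian matrix. -/
noncomputable def lmax {n : ℕ} {A : Matrix (Fin n) (Fin n) ℂ} (hA : A.IsHermitian) : ℝ :=
  ⨆ i, hA.eigenvalues i

theorem stmt11_aux {m : ℕ} (C : Matrix (Fin m) (Fin m) ℂ) (hC : C.IsHermitian) :
    ∃ U : Matrix (Fin m) (Fin m) ℂ, Uᴴ * U = 1 ∧ U * Uᴴ = 1 ∧
      C = U * diagonal (fun i => ((hC.eigenvalues i : ℝ) : ℂ)) * Uᴴ := by
  refine ⟨hC.eigenvectorUnitary, ?_, ?_, ?_⟩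
  · exact Unitary.coe_star_mul_self hC.eigenvectorUnitary
  · exact Unitary.coe_mul_star_self hC.eigenvectorUnitary
  · have h := hC.spectral_theorem
    rw [Unitary.conjStarAlgAut_apply] at h
    exact h

/-- Lemma 4 (matrix form): for Hermitian `M`, positive semidefinite `B` and Hermitian `C`,
`M ⊗ I ⪰ B ⊗ C` holds iff `M ⪰ λ_max(C) B`. -/
theorem stmt11 (n m : ℕ) (hm : 1 ≤ m)
    (M B : Matrix (Fin n) (Fin n) ℂ) (hM : M.IsHermitian) (hB : B.PosSemidef)
    (C : Matrix (Fin m) (Fin m) ℂ) (hC : C.IsHermitian) :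
    (M ⊗ₖ (1 : Matrix (Fin m) (Fin m) ℂ) - B ⊗ₖ C).PosSemidef ↔
    (M - ((lmax hC : ℝ) : ℂ) • B).PosSemidef := by
  obtain ⟨U, h1, h2, h3⟩ := stmt11_aux C hC
  have : Nonempty (Fin m) := ⟨⟨0, hm⟩⟩
  constructor
  · intro h
    obtain ⟨j, hj⟩ := exists_eq_ciSup_of_finite (f := hC.eigenvalues)
    have hD : Uᴴ * C * U = diagonal (fun i => ((hC.eigenvalues i : ℝ) : ℂ)) := by
      calc Uᴴ * C * U = Uᴴ * (U * diagonal (fun i => ((hC.eigenvalues i : ℝ) : ℂ)) * Uᴴ) * U :=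
            congrArg (fun X => Uᴴ * X * U) h3
        _ = (Uᴴ * U) * diagonal (fun i => ((hC.eigenvalues i : ℝ) : ℂ)) * (Uᴴ * U) := by
            simp only [Matrix.mul_assoc]
        _ = _ := by rw [h1]; simp
    have h' := (h.conjTranspose_mul_mul_same
      ((1 : Matrix (Fin n) (Fin n) ℂ) ⊗ₖ U)).submatrix (fun i : Fin n => (i, j))
    have e : ((1 : Matrix (Fin n) (Fin n) ℂ) ⊗ₖ U)ᴴ *
        (M ⊗ₖ (1 : Matrix (Fin m) (Fin m) ℂ) - B ⊗ₖ C) * ((1 : Matrix (Fin n) (Fin n) ℂ) ⊗ₖ U)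
        = M ⊗ₖ (1 : Matrix (Fin m) (Fin m) ℂ) -
          B ⊗ₖ diagonal (fun i => ((hC.eigenvalues i : ℝ) : ℂ)) := by
      rw [Matrix.mul_sub, Matrix.sub_mul, conjTranspose_kronecker]
      simp only [← mul_kronecker_mul, hD, h1, conjTranspose_one, Matrix.one_mul, Matrix.mul_one]
    rw [e] at h'
    convert h' using 1
    ext a b
    simp [lmax, ← hj, kroneckerMap_apply, mul_comm]
  · intro h
    have hp : ((((lmax hC : ℝ) : ℂ)) • (1 : Matrix (Fin m) (Fin m) ℂ) - C).PosSemidef := by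
      have hd : (diagonal (fun i => (((lmax hC - hC.eigenvalues i : ℝ)) : ℂ))).PosSemidef := by
        apply PosSemidef.diagonal
        intro i
        have : hC.eigenvalues i ≤ lmax hC := le_ciSup (Set.finite_range _).bddAbove i
        simpa using this
      have h' := hd.mul_mul_conjTranspose_same U
      convert h' using 1
      have e : diagonal (fun i => (((lmax hC - hC.eigenvalues i : ℝ)) : ℂ)) =
          ((lmax hC : ℝ) : ℂ) • (1 : Matrix (Fin m) (Fin m) ℂ) -
            diagonal (fun i => ((hC.eigenvalues i : ℝ) : ℂ)) := by
        rw [smul_one_eq_diagonal, diagonal_sub]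
        simp
      rw [e, Matrix.mul_sub, Matrix.sub_mul, ← h3]
      simp [h2]
    have := (h.kronecker (PosSemidef.one (n := Fin m) (R := ℂ))).add (hB.kronecker hp)
    have e : M ⊗ₖ (1 : Matrix (Fin m) (Fin m) ℂ) - B ⊗ₖ C =
        (M - ((lmax hC : ℝ) : ℂ) • B) ⊗ₖ (1 : Matrix (Fin m) (Fin m) ℂ) +
        B ⊗ₖ (((lmax hC : ℝ) : ℂ) • (1 : Matrix (Fin m) (Fin m) ℂ) - C) := by
      ext ⟨a, b⟩ ⟨c, d⟩
      simp
      ring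
    rw [e]
    exact this
end

section
/- Let n ≥ 1, let γ_1 ≥ γ_2 ≥ … ≥ γ_n > 0 be positive reals, and let 𝒫 > 0. Define m_* as the largest m ∈ {1, …, n} such that (1/√γ_m) · Σ_{i=1}^m (1/√γ_i) − Σ_{i=1}^m (1/γ_i) < 𝒫 (the set of such m is nonempty since m = 1 gives 0 < 𝒫). Define κ*_j = ((𝒫 + Σ_{i=1}^{m_*} 1/γ_i) / (Σ_{i=1}^{m_*} 1/√γ_i)) · (1/√γ_j) − 1/γ_j for 1 ≤ j ≤ m_*, and κ*_j = 0 for m_* < j ≤ n. Then κ*_j ≥ 0 for all j, Σ_{j=1}^n κ*_j = 𝒫, and for every choice of nonnegative reals κ_1, …, κ_n with Σ_{j=1}^n κ_j ≤ 𝒫 one has Σ_{j=1}^n 1/(1 + γ_j κ_j) ≥ Σ_{j=1}^n 1/(1 + γ_j κ*_j) = n − m_* + (Σ_{i=1}^{m_*} 1/√γ_i)² / (𝒫 + Σ_{i=1}^{m_*} 1/γ_i). (Water-filling solution of the scalar problem in the proof of Theorem 5.) -/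
open Finset

/-- Water-filling solution of the scalar problem in the proof of Theorem 5.
Indices are 0-based: `mstar : Fin n` represents `m_* = mstar + 1`, and the sums
`Σ_{i=1}^{m_*}` become sums over `i ∈ Finset.Iic mstar`.  The allocation `κ*` is
nonnegative, exhausts the budget, minimizes `Σ_j 1/(1 + γ_j κ_j)` among all nonnegative
allocations meeting the budget, and attains the stated optimal value. -/
theorem stmt14 (n : ℕ) (hn : 1 ≤ n) (γ : Fin n → ℝ) (hγanti : Antitone γ)
    (hγpos : ∀ i, 0 < γ i) (Pbudget : ℝ) (hP : 0 < Pbudget)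
    (mstar : Fin n)
    (hcond : (1 / Real.sqrt (γ mstar)) * (∑ i ∈ Finset.Iic mstar, 1 / Real.sqrt (γ i))
        - ∑ i ∈ Finset.Iic mstar, 1 / γ i < Pbudget)
    (hmax : ∀ k : Fin n, mstar < k →
      ¬((1 / Real.sqrt (γ k)) * (∑ i ∈ Finset.Iic k, 1 / Real.sqrt (γ i))
        - ∑ i ∈ Finset.Iic k, 1 / γ i < Pbudget))
    (κstar : Fin n → ℝ)
    (hκstar : ∀ j, κstar j = if j ≤ mstar then
        ((Pbudget + ∑ i ∈ Finset.Iic mstar, 1 / γ i) /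
            (∑ i ∈ Finset.Iic mstar, 1 / Real.sqrt (γ i))) * (1 / Real.sqrt (γ j))
          - 1 / γ j
      else 0) :
    (∀ j, 0 ≤ κstar j) ∧
    (∑ j, κstar j = Pbudget) ∧
    (∀ κ : Fin n → ℝ, (∀ j, 0 ≤ κ j) → ∑ j, κ j ≤ Pbudget →
      ∑ j, 1 / (1 + γ j * κstar j) ≤ ∑ j, 1 / (1 + γ j * κ j)) ∧
    ∑ j, 1 / (1 + γ j * κstar j) =
      (n : ℝ) - ((mstar : ℕ) + 1) +
        (∑ i ∈ Finset.Iic mstar, 1 / Real.sqrt (γ i)) ^ 2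
          / (Pbudget + ∑ i ∈ Finset.Iic mstar, 1 / γ i) := by
  obtain ⟨a, ha⟩ : ∃ a : Fin n → ℝ, ∀ j, a j = 1 / Real.sqrt (γ j) := ⟨_, fun _ => rfl⟩
  have hapos : ∀ j, 0 < a j := fun j => by
    rw [ha]; have := Real.sqrt_pos.2 (hγpos j); positivity
  have hag : ∀ j, 1 / γ j = a j ^ 2 := fun j => by
    rw [ha, div_pow, Real.sq_sqrt (hγpos j).le, one_pow]
  have hamono : Monotone a := fun i j hij => by
    rw [ha, ha]
    exact one_div_le_one_div_of_le (Real.sqrt_pos.2 (hγpos j)) (Real.sqrt_le_sqrt (hγanti hij))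
  have hval : ∀ j x, 0 ≤ x → 1 / (1 + γ j * x) = a j ^ 2 / (a j ^ 2 + x) := fun j x hx => by
    rw [← hag]
    have := hγpos j
    field_simp
  simp only [hag, ← ha] at hcond hmax hκstar ⊢
  set S := ∑ i ∈ Finset.Iic mstar, a i with hS
  set Q := ∑ i ∈ Finset.Iic mstar, a i ^ 2 with hQ
  have hSpos : 0 < S := Finset.sum_pos (fun i _ => hapos i) ⟨mstar, by simp⟩
  have hQ0 : 0 ≤ Q := Finset.sum_nonneg (fun i _ => sq_nonneg _)
  have hTpos : 0 < Pbudget + Q := by linarith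
  obtain ⟨L, hL⟩ : ∃ L, L = (Pbudget + Q) / S := ⟨_, rfl⟩
  have hLpos : 0 < L := by rw [hL]; positivity
  have hLS : L * S = Pbudget + Q := by rw [hL]; field_simp
  rw [← hL] at hκstar
  have hlow : ∀ j, j ≤ mstar → a j ≤ L := fun j hj => by
    refine (hamono hj).trans ?_
    rw [hL, le_div_iff₀ hSpos]; linarith
  have hhigh : ∀ j, mstar < j → L ≤ a j := fun j hj => by
    have hlt : (mstar : ℕ) < j := hj
    obtain ⟨k, hk⟩ : ∃ k : Fin n, (k : ℕ) = mstar + 1 := ⟨⟨mstar + 1, by omega⟩, rfl⟩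
    have hkj : k ≤ j := by rw [Fin.le_def]; omega
    have hmk : mstar < k := by rw [Fin.lt_def]; omega
    refine le_trans ?_ (hamono hkj)
    have hI : Finset.Iic k = insert k (Finset.Iic mstar) := by
      ext x; simp only [Finset.mem_Iic, Finset.mem_insert, Fin.le_def, Fin.ext_iff]; omega
    have hni : k ∉ Finset.Iic mstar := by simpa using hmk
    have h := hmax k hmk
    rw [hI, Finset.sum_insert hni, Finset.sum_insert hni, ← hS, ← hQ] at h
    rw [hL, div_le_iff₀ hSpos]; nlinarith
  have hnn : ∀ j, 0 ≤ κstar j := fun j => by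
    rw [hκstar]
    split_ifs with h
    · nlinarith [hlow j h, hapos j]
    · exact le_rfl
  have hfilt : Finset.univ.filter (fun j => j ≤ mstar) = Finset.Iic mstar := by ext; simp
  have hsum : ∑ j, κstar j = Pbudget := by
    simp only [hκstar]
    rw [← Finset.sum_filter, hfilt, Finset.sum_sub_distrib, ← Finset.mul_sum, ← hS, ← hQ]
    linarith
  have hv : ∀ j, 1 / (1 + γ j * κstar j) = if j ≤ mstar then a j / L else 1 := fun j => by
    rw [hval j _ (hnn j), hκstar]
    have := hapos j
    split_ifs with h
    · rw [add_sub_cancel]; field_simp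
    · rw [add_zero, div_self (by positivity)]
  refine ⟨hnn, hsum, ?_, ?_⟩
  · intro κ hκ hκs
    have key : ∀ j, 1 / (1 + γ j * κstar j) ≤ 1 / (1 + γ j * κ j) + (κ j - κstar j) / L ^ 2 := by
      intro j
      rw [hv, hval j _ (hκ j), hκstar]
      have h1 := hapos j
      have h2 := hκ j
      have hx : 0 < a j ^ 2 + κ j := by positivity
      split_ifs with h
      · have e : a j ^ 2 / (a j ^ 2 + κ j) + (κ j - (L * a j - a j ^ 2)) / L ^ 2 - a j / L
            = (a j * L - (a j ^ 2 + κ j)) ^ 2 / ((a j ^ 2 + κ j) * L ^ 2) := by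
          field_simp; ring
        have : 0 ≤ (a j * L - (a j ^ 2 + κ j)) ^ 2 / ((a j ^ 2 + κ j) * L ^ 2) := by positivity
        linarith
      · have h3 := hhigh j (not_le.1 h)
        have h4 : L ^ 2 ≤ a j ^ 2 + κ j := by nlinarith
        have h5 : κ j / (a j ^ 2 + κ j) ≤ κ j / L ^ 2 :=
          div_le_div_of_nonneg_left h2 (by positivity) h4
        have h6 : a j ^ 2 / (a j ^ 2 + κ j) + κ j / (a j ^ 2 + κ j) = 1 := by
          rw [← add_div, div_self hx.ne']
        rw [sub_zero]; linarith
    have h := Finset.sum_le_sum (fun j (_ : j ∈ Finset.univ) => key j)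
    rw [Finset.sum_add_distrib, ← Finset.sum_div, Finset.sum_sub_distrib, hsum] at h
    have : (∑ j, κ j - Pbudget) / L ^ 2 ≤ 0 :=
      div_nonpos_of_nonpos_of_nonneg (by linarith) (by positivity)
    linarith
  · simp only [hv]
    have e : ∀ j, (if j ≤ mstar then a j / L else 1) = 1 + if j ≤ mstar then a j / L - 1 else 0 :=
      fun j => by split_ifs <;> ring
    simp only [e]
    rw [Finset.sum_add_distrib, ← Finset.sum_filter, hfilt, Finset.sum_sub_distrib,
      ← Finset.sum_div, ← hS]
    simp only [Finset.sum_const, Finset.card_univ, Fintype.card_fin, Fin.card_Iic, nsmul_eq_mul,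
      mul_one]
    have : S / L = S ^ 2 / (Pbudget + Q) := by rw [hL]; field_simp
    rw [this]; push_cast; ring
end
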